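/- Let k ≥ 2 be an integer and α > 0. There exists a constant c_k = c_k(α) such that the following holds: if H is a k-graph on n vertices, with n divisible by k−1, satisfying δ_{k−1}(H) ≥ αn, and p = c_k/n^{k−1}, then H ∪ 𝔾^{(k)}(n,p) is a.a.s. 1-Hamiltonian. -/

import Mathlib

open Finset
open scoped Classical

/-- All `k`-subsets of `Fin n` (the possible edges of a `k`-graph on `n` vertices). -/
def kSets (n k : ℕ) : Finset (Finset (Fin n)) := Finset.univ.powersetCard k

/-- The probability that the binomial random `k`-graph `G^{(k)}(n,p)` (each `k`-set is an
edge independently with probability `p`) has an edge set satisfying the property `A`. -/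
noncomputable def gProb (n k : ℕ) (p : ℝ) (A : Finset (Finset (Fin n)) → Prop) : ℝ :=
  ∑ E ∈ (kSets n k).powerset.filter (fun E => A E),
    p ^ E.card * (1 - p) ^ ((kSets n k).card - E.card)

/-- Expectation of a random variable `f` of the random `k`-graph `G^{(k)}(n,p)`. -/
noncomputable def gExpect (n k : ℕ) (p : ℝ) (f : Finset (Finset (Fin n)) → ℝ) : ℝ :=
  ∑ E ∈ (kSets n k).powerset,
    p ^ E.card * (1 - p) ^ ((kSets n k).card - E.card) * f E

/-- The degree of a vertex set `S` in the `k`-graph with edge set `E`: the number of edges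
containing `S` (equivalently, the number of `(k-|S|)`-sets `T` with `S ∪ T ∈ E`). -/
def degOf {n : ℕ} (E : Finset (Finset (Fin n))) (S : Finset (Fin n)) : ℕ :=
  (E.filter (fun e => S ⊆ e)).card

/-- The minimum vertex degree (minimum 1-degree) of a `k`-graph. -/
noncomputable def minVertexDeg {n : ℕ} (E : Finset (Finset (Fin n))) : ℕ :=
  sInf {d : ℕ | ∃ v : Fin n, degOf E {v} = d}

/-- The index set of the `i`-th edge of the path `P_{a,x}`:
`{x + i*d, x + i*d + 1, …, x + i*d + k - 1}` (here `d = k - ℓ`). -/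
def edgeIdx (k d x i : ℕ) : Finset ℕ := (Finset.range k).image (fun j => x + i * d + j)

/-- The ordered `b`-tuple `w` spans a labeled copy of `P_{a,x}` (the `k`-uniform `ℓ`-path
with `a` edges, preceded and followed by `x` isolated vertices) in the edge set `E`. -/
def SpansPax {n : ℕ} (k ℓ a x : ℕ) (E : Finset (Finset (Fin n))) {b : ℕ}
    (w : Fin b → Fin n) : Prop :=
  Function.Injective w ∧
  ∀ i < a,
    ((Finset.univ.filter (fun m : Fin b => (m : ℕ) ∈ edgeIdx k (k - ℓ) x i)).image w) ∈ E

/-- The ordered tuple `w` spans a labeled copy of the `ℓ`-path `P_a` of length `a` in `E`. -/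
def SpansPath {n : ℕ} (k ℓ a : ℕ) (E : Finset (Finset (Fin n))) {b : ℕ}
    (w : Fin b → Fin n) : Prop :=
  SpansPax k ℓ a 0 E w

/-- The first `ℓ`-end of the ordered tuple `w` (its first `ℓ` vertices, as a set). -/
def firstEnd {n b : ℕ} (ℓ : ℕ) (w : Fin b → Fin n) : Finset (Fin n) :=
  (Finset.univ.filter (fun m : Fin b => (m : ℕ) < ℓ)).image w

/-- The last `ℓ`-end of the ordered tuple `w` (its last `ℓ` vertices, as a set). -/
def lastEnd {n b : ℕ} (ℓ : ℕ) (w : Fin b → Fin n) : Finset (Fin n) :=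
  (Finset.univ.filter (fun m : Fin b => b - ℓ ≤ (m : ℕ))).image w

/-- The `k`-graph with edge set `E` on vertex set `Fin n` contains a Hamiltonian `ℓ`-cycle:
there is a cyclic ordering of all `n` vertices such that each of the `n/(k-ℓ)` edges
consists of `k` consecutive vertices, consecutive edges overlapping in `ℓ` vertices. -/
def IsHamCycle (n k ℓ : ℕ) (E : Finset (Finset (Fin n))) : Prop :=
  ∃ f : ZMod n → Fin n, Function.Bijective f ∧
    ∀ i < n / (k - ℓ),
      ((Finset.range k).image (fun j => f (((i * (k - ℓ) + j : ℕ) : ZMod n)))) ∈ E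

/-- The `ℓ`-shadow of a `k`-graph: all `ℓ`-sets contained in some edge. -/
def shadowL {n : ℕ} (ℓ : ℕ) (E : Finset (Finset (Fin n))) : Finset (Finset (Fin n)) :=
  (Finset.univ.powersetCard ℓ).filter (fun S => ∃ e ∈ E, S ⊆ e)

/-- The list `v` of vertices spans a copy of the `ℓ`-path `P_a` of length `a` in `E`. -/
def ListSpans {n : ℕ} (k ℓ a : ℕ) (E : Finset (Finset (Fin n))) (v : List (Fin n)) : Prop :=
  v.Nodup ∧ v.length = a * (k - ℓ) + ℓ ∧
    ∀ i < a, ((v.drop (i * (k - ℓ))).take k).toFinset ∈ E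

/-- `Φ_F(n,p) = min { n^{v_H} p^{e_H} : H ⊆ F, e_H > 0 }`, where the subgraph `H` is given
by a nonempty edge set `E' ⊆ F` together with a vertex set `W` containing all its edges. -/
noncomputable def Phi {V : Type*} (n : ℕ) (p : ℝ) (F : Finset (Finset V)) : ℝ :=
  sInf {r : ℝ | ∃ (W : Finset V) (E' : Finset (Finset V)),
    E' ⊆ F ∧ E'.Nonempty ∧ (∀ e ∈ E', e ⊆ W) ∧ r = (n : ℝ) ^ W.card * p ^ E'.card}

/-- The ordered tuple `w` spans a labeled copy of the `k`-graph `F` (given by its edge set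
`Fe` on vertex set `Fin s`) in the edge set `E`. -/
def SpansCopy {n s : ℕ} (Fe : Finset (Finset (Fin s))) (E : Finset (Finset (Fin n)))
    (w : Fin s → Fin n) : Prop :=
  ∀ e ∈ Fe, e.image w ∈ E

/-- Concatenation of three ordered tuples. -/
def concat3 {n p q r : ℕ} (A : Fin p → Fin n) (C : Fin q → Fin n) (B : Fin r → Fin n)
    (m : Fin (p + q + r)) : Fin n :=
  if h : (m : ℕ) < p then A ⟨(m : ℕ), h⟩
  else if h2 : (m : ℕ) < p + q then C ⟨(m : ℕ) - p, by omega⟩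
  else B ⟨(m : ℕ) - (p + q), by have := m.isLt; omega⟩

/-- `w`, spanning an `ℓ`-path of length `a`, is a `W`-absorber in `E`: it avoids `W`, and
its vertex set together with `W` spans an `ℓ`-path (of length `a+1` when `|W| = k - ℓ`)
with the same two `ℓ`-ends. -/
def IsAbsorber {n : ℕ} (k ℓ a : ℕ) (E : Finset (Finset (Fin n))) {b : ℕ}
    (w : Fin b → Fin n) (W : Finset (Fin n)) : Prop :=
  (∀ m, w m ∉ W) ∧
  ∃ w' : Fin (b + W.card) → Fin n, SpansPath k ℓ (a + 1) E w' ∧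
    Finset.image w' Finset.univ = Finset.image w Finset.univ ∪ W ∧
    firstEnd ℓ w' = firstEnd ℓ w ∧ lastEnd ℓ w' = lastEnd ℓ w

open Finset
open scoped Classical

section basics
variable {n : ℕ}

def EdgeM (E : Finset (Finset (Fin n))) (s : Multiset (Fin n)) : Prop := ∃ e ∈ E, e.val = s

structure LDart (n : ℕ) where
  x : Fin n
  z : Fin n
  O : Multiset (Fin n)
  I : Multiset (Fin n)

def LDart.ok (E : Finset (Finset (Fin n))) (d : LDart n) : Prop :=
  EdgeM E (d.x ::ₘ d.z ::ₘ (d.O + d.I))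

def LDart.flip (d : LDart n) : LDart n := ⟨d.z, d.x, d.O, d.I⟩

def vsL : List (LDart n) → Multiset (Fin n)
  | [] => 0
  | d :: D => (d.z ::ₘ (d.O + d.I)) + vsL D

def chn : Fin n → List (LDart n) → Fin n → Prop
  | a, [], b => a = b
  | a, d :: D, b => d.x = a ∧ chn d.z D b

def revL (D : List (LDart n)) : List (LDart n) := (D.map LDart.flip).reverse

theorem EdgeM.nodup {E : Finset (Finset (Fin n))} {s : Multiset (Fin n)} (h : EdgeM E s) :
    s.Nodup := by
  obtain ⟨e, _, rfl⟩ := h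
  exact e.nodup

theorem EdgeM.mono {E E' : Finset (Finset (Fin n))} (hE : E ⊆ E') {s : Multiset (Fin n)}
    (h : EdgeM E s) : EdgeM E' s := by
  obtain ⟨e, he, rfl⟩ := h
  exact ⟨e, hE he, rfl⟩

theorem EdgeM.card {k : ℕ} {E : Finset (Finset (Fin n))} (hE : E ⊆ kSets n k)
    {s : Multiset (Fin n)} (h : EdgeM E s) : Multiset.card s = k := by
  obtain ⟨e, he, rfl⟩ := h
  exact (Finset.mem_powersetCard.1 (hE he)).2

theorem vsL_append (D D' : List (LDart n)) : vsL (D ++ D') = vsL D + vsL D' := by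
  induction D with
  | nil => simp [vsL]
  | cons d D ih => simp [vsL, ih, add_assoc]

theorem chn_append {a c : Fin n} {D D' : List (LDart n)} :
    chn a (D ++ D') c ↔ ∃ b, chn a D b ∧ chn b D' c := by
  induction D generalizing a with
  | nil => simp [chn]
  | cons d D ih => simp [chn, ih, and_assoc]

theorem revL_cons (d : LDart n) (D : List (LDart n)) : revL (d :: D) = revL D ++ [d.flip] := by
  simp [revL]

theorem revL_append (D D' : List (LDart n)) : revL (D ++ D') = revL D' ++ revL D := by
  simp [revL]

theorem chn_rev {a b : Fin n} {D : List (LDart n)} (h : chn a D b) : chn b (revL D) a := by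
  induction D generalizing a with
  | nil => simpa [chn, revL] using h.symm
  | cons d D ih =>
    obtain ⟨h1, h2⟩ := h
    rw [revL_cons, chn_append]
    exact ⟨d.z, ih h2, rfl, h1⟩

theorem vsL_rev {a b : Fin n} {D : List (LDart n)} (h : chn a D b) :
    a ::ₘ vsL D = b ::ₘ vsL (revL D) := by
  induction D generalizing a with
  | nil => simpa [chn, revL, vsL] using h
  | cons d D ih =>
    obtain ⟨h1, h2⟩ := h
    have := ih h2
    rw [revL_cons, vsL_append]
    simp only [vsL, LDart.flip, add_zero]
    rw [← Multiset.cons_add b, ← this, h1]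
    simp only [← Multiset.singleton_add]
    abel

theorem ok_flip {E : Finset (Finset (Fin n))} {d : LDart n} (h : d.ok E) : d.flip.ok E := by
  unfold LDart.ok LDart.flip at *
  rwa [Multiset.cons_swap]

theorem ok_rev {E : Finset (Finset (Fin n))} {D : List (LDart n)} (h : ∀ d ∈ D, d.ok E) :
    ∀ d ∈ revL D, d.ok E := by
  intro d hd
  simp only [revL, List.mem_reverse, List.mem_map] at hd
  obtain ⟨d', hd', rfl⟩ := hd
  exact ok_flip (h d' hd')

theorem LDart.ok.mono {E E' : Finset (Finset (Fin n))} (hE : E ⊆ E') {d : LDart n}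
    (h : d.ok E) : d.ok E' := EdgeM.mono hE h

theorem revL_revL (D : List (LDart n)) : revL (revL D) = D := by
  have : (LDart.flip ∘ LDart.flip : LDart n → LDart n) = id := by
    funext d; rfl
  simp [revL, this]

theorem card_vsL {r : ℕ} {E : Finset (Finset (Fin n))} (hE : E ⊆ kSets n (r+2))
    {D : List (LDart n)} (h : ∀ d ∈ D, d.ok E) : Multiset.card (vsL D) = (r+1) * D.length := by
  induction D with
  | nil => simp [vsL]
  | cons d D ih =>
    have h1 := ih (fun d hd => h d (List.mem_cons_of_mem _ hd))
    have h2 := EdgeM.card hE (h d List.mem_cons_self)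
    simp [vsL] at h2 ⊢
    rw [h1, Nat.mul_add]
    omega

theorem mem_vsL {D : List (LDart n)} {d : LDart n} (hd : d ∈ D) {v : Fin n}
    (hv : v ∈ d.z ::ₘ (d.O + d.I)) : v ∈ vsL D := by
  induction D with
  | nil => simp at hd
  | cons d' D ih =>
    rcases List.mem_cons.1 hd with rfl | h
    · exact Multiset.mem_add.2 (Or.inl hv)
    · exact Multiset.mem_add.2 (Or.inr (ih h))

/-- greedy disjoint subsets -/
theorem exists_disjoint_subsets (N : ℕ) : ∀ (r : ℕ) (C : Fin r → Finset (Fin n)),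
    (∀ j, r * N ≤ (C j).card) →
    ∃ B : Fin r → Finset (Fin n), (∀ j, B j ⊆ C j) ∧ (∀ j, (B j).card = N) ∧
      ∀ i j, i ≠ j → Disjoint (B i) (B j) := by
  intro r
  induction r with
  | zero => intro C _; exact ⟨C, fun j => j.elim0, fun j => j.elim0, fun j => j.elim0⟩
  | succ r ih =>
    intro C hC
    obtain ⟨B0, hB0, hc0⟩ := Finset.exists_subset_card_eq
      (show N ≤ (C 0).card by have := hC 0; nlinarith)
    obtain ⟨B, h1, h2, h3⟩ := ih (fun j => C j.succ \ B0) (by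
      intro j
      have := hC j.succ
      have h := Finset.le_card_sdiff B0 (C j.succ)
      rw [hc0] at h
      have : (r+1)*N = r*N + N := by ring
      omega)
    refine ⟨Fin.cons B0 B, ?_, ?_, ?_⟩
    · intro j
      refine Fin.cases ?_ (fun j => ?_) j
      · simpa using hB0
      · simpa using (h1 j).trans Finset.sdiff_subset
    · intro j
      refine Fin.cases ?_ (fun j => ?_) j
      · simpa using hc0
      · simpa using h2 j
    · have key : ∀ j, Disjoint B0 (B j) := fun j =>
        Finset.disjoint_of_subset_right (h1 j) Finset.disjoint_sdiff
      intro i j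
      refine Fin.cases ?_ (fun i => ?_) i
      · refine Fin.cases ?_ (fun j => ?_) j
        · simp
        · intro _; simpa using key j
      · refine Fin.cases ?_ (fun j => ?_) j
        · intro _; simpa using (key i).symm
        · intro h; simpa using h3 i j (fun hq => h (by rw [hq]))

/-- the pseudorandom property -/
def PRP (G : Finset (Finset (Fin n))) (N k : ℕ) : Prop :=
  ∀ A : Fin k → Finset (Fin n), (∀ i, (A i).card = N) → (∀ i j, i ≠ j → Disjoint (A i) (A j)) →
    ∃ c : Fin k → Fin n, (∀ i, c i ∈ A i) ∧ Finset.univ.image c ∈ G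

theorem PRP.use {G : Finset (Finset (Fin n))} {N r : ℕ} (h : PRP G N (r+2))
    {X Y : Finset (Fin n)} (C : Fin r → Finset (Fin n)) (hX : N ≤ X.card) (hY : N ≤ Y.card)
    (hXY : Disjoint X Y) (hC : ∀ j, r * N ≤ (C j).card) (hCX : ∀ j, Disjoint (C j) X)
    (hCY : ∀ j, Disjoint (C j) Y) :
    ∃ x ∈ X, ∃ y ∈ Y, ∃ c : Fin r → Fin n, (∀ j, c j ∈ C j) ∧
      EdgeM G (x ::ₘ y ::ₘ (Finset.univ.val.map c)) := by
  obtain ⟨B, h1, h2, h3⟩ := exists_disjoint_subsets N r C hC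
  obtain ⟨X', hX', hcX⟩ := Finset.exists_subset_card_eq hX
  obtain ⟨Y', hY', hcY⟩ := Finset.exists_subset_card_eq hY
  have dXY : Disjoint X' Y' := Finset.disjoint_of_subset_left hX' (Finset.disjoint_of_subset_right hY' hXY)
  have dX : ∀ j, Disjoint X' (B j) := fun j => Finset.disjoint_of_subset_left hX' (Finset.disjoint_of_subset_right (h1 j) (hCX j).symm)
  have dY : ∀ j, Disjoint Y' (B j) := fun j => Finset.disjoint_of_subset_left hY' (Finset.disjoint_of_subset_right (h1 j) (hCY j).symm)
  have hdis : ∀ i j : Fin (r+2), i ≠ j → Disjoint ((Fin.cons X' (Fin.cons Y' B) : Fin (r+2) → Finset (Fin n)) i) ((Fin.cons X' (Fin.cons Y' B) : Fin (r+2) → Finset (Fin n)) j) := by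
    intro i j
    refine Fin.cases ?_ (fun i => ?_) i <;> refine Fin.cases ?_ (fun j => ?_) j
    · simp
    · refine Fin.cases ?_ (fun j => ?_) j
      · simpa using dXY
      · intro _; simpa using dX j
    · refine Fin.cases ?_ (fun i => ?_) i
      · simpa using dXY.symm
      · intro _; simpa using (dX i).symm
    · refine Fin.cases ?_ (fun i => ?_) i <;> refine Fin.cases ?_ (fun j => ?_) j
      · simp
      · intro _; simpa using dY j
      · intro _; simpa using (dY i).symm
      · intro h; simpa using h3 i j (fun hq => h (by rw [hq]))
  obtain ⟨c, hc, hcG⟩ := h (Fin.cons X' (Fin.cons Y' B)) (by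
    intro i
    refine Fin.cases ?_ (fun i => ?_) i
    · simpa using hcX
    · refine Fin.cases ?_ (fun i => ?_) i
      · simpa using hcY
      · simpa using h2 i) hdis
  refine ⟨c 0, hX' (by simpa using hc 0), c 1, hY' (by simpa using hc 1),
    fun j => c j.succ.succ, fun j => h1 j (by simpa using hc j.succ.succ), _, hcG, ?_⟩
  have hinj : Function.Injective c := by
    intro i j hij
    by_contra hne
    exact (Finset.disjoint_left.1 (hdis i j hne)) (hc i) (hij ▸ hc j)
  rw [Finset.image_val_of_injOn hinj.injOn]
  rw [Fin.univ_val_map, Fin.univ_val_map, List.ofFn_succ, List.ofFn_succ]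
  rfl

end basics

open Finset
open scoped Classical

section build
variable {n : ℕ}

def nbrS (H : Finset (Finset (Fin n))) (S : Finset (Fin n)) : Finset (Fin n) :=
  Finset.univ.filter (fun x => x ∉ S ∧ insert x S ∈ H)

theorem degOf_le_nbr {r : ℕ} {H : Finset (Finset (Fin n))} (hH : H ⊆ kSets n (r+2))
    {S : Finset (Fin n)} (hS : S.card = r + 1) : degOf H S ≤ (nbrS H S).card := by
  unfold degOf
  refine le_trans (Finset.card_le_card (t := (nbrS H S).image (fun x => insert x S)) ?_)
    Finset.card_image_le
  intro e he
  rw [Finset.mem_filter] at he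
  have hc : e.card = r + 2 := (Finset.mem_powersetCard.1 (hH he.1)).2
  have h1 : (e \ S).card = 1 := by
    rw [Finset.card_sdiff_of_subset he.2]; omega
  obtain ⟨x, hx⟩ := Finset.card_eq_one.1 h1
  have hxe : x ∈ e \ S := by rw [hx]; simp
  have : insert x S = e := by
    rw [Finset.insert_eq, ← hx]
    exact Finset.sdiff_union_of_subset he.2
  rw [Finset.mem_image]
  refine ⟨x, ?_, this⟩
  simp [nbrS, this, he.1, (Finset.mem_sdiff.1 hxe).2]

theorem edge_of_nbr {H : Finset (Finset (Fin n))} {b x : Fin n} {T : Finset (Fin n)} (hb : b ∉ T)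
    (hx : x ∈ nbrS H (insert b T)) : EdgeM H (b ::ₘ x ::ₘ T.val) := by
  simp only [nbrS, Finset.mem_filter, Finset.mem_univ, true_and] at hx
  refine ⟨_, hx.2, ?_⟩
  rw [Finset.insert_val_of_notMem hx.1, Finset.insert_val_of_notMem hb, Multiset.cons_swap]

theorem chn_end_mem {a b : Fin n} {D : List (LDart n)} (h : chn a D b) : b ∈ a ::ₘ vsL D := by
  rw [vsL_rev h]; simp

theorem reserve {r d N : ℕ} {H : Finset (Finset (Fin n))}
    (hdeg : ∀ S : Finset (Fin n), S.card = r + 1 → d ≤ (nbrS H S).card) (hdn : d ≤ n)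
    {b : Fin n} {F : Finset (Fin n)} (hb : b ∈ F) (hF : F.card + r + N + r * N ≤ d) :
    ∃ T X R : Finset (Fin n), T.card = r ∧ X.card = N ∧ R.card = r * N ∧
      Disjoint T X ∧ Disjoint T R ∧ Disjoint X R ∧ Disjoint T F ∧ Disjoint X F ∧ Disjoint R F ∧
      ∀ x ∈ X, EdgeM H (b ::ₘ x ::ₘ T.val) := by
  obtain ⟨T, hT, hTc⟩ := Finset.exists_subset_card_eq (s := univ \ F) (n := r) (by
    rw [Finset.card_sdiff_of_subset (Finset.subset_univ _), Finset.card_univ, Fintype.card_fin]; omega)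
  have dTF : Disjoint T F := Finset.disjoint_of_subset_left hT Finset.sdiff_disjoint
  have hbT : b ∉ T := fun h => Finset.disjoint_left.1 dTF h hb
  obtain ⟨X, hX, hXc⟩ := Finset.exists_subset_card_eq (s := nbrS H (insert b T) \ F) (n := N) (by
    have h1 := hdeg (insert b T) (by rw [Finset.card_insert_of_notMem hbT, hTc])
    have h2 := Finset.le_card_sdiff F (nbrS H (insert b T))
    omega)
  have dXF : Disjoint X F := Finset.disjoint_of_subset_left hX Finset.sdiff_disjoint
  have hXn : ∀ x ∈ X, x ∈ nbrS H (insert b T) := fun x hx => (Finset.mem_sdiff.1 (hX hx)).1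
  have dTX : Disjoint T X := by
    rw [Finset.disjoint_right]
    intro x hx hxT
    have := hXn x hx
    simp only [nbrS, Finset.mem_filter, Finset.mem_insert] at this
    exact this.2.1 (Or.inr hxT)
  obtain ⟨R, hR, hRc⟩ := Finset.exists_subset_card_eq (s := univ \ (F ∪ T ∪ X)) (n := r * N) (by
    rw [Finset.card_sdiff_of_subset (Finset.subset_univ _), Finset.card_univ, Fintype.card_fin]
    have h1 := Finset.card_union_le (F ∪ T) X
    have h2 := Finset.card_union_le F T
    omega)
  have dR : Disjoint R (F ∪ T ∪ X) := Finset.disjoint_of_subset_left hR Finset.sdiff_disjoint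
  rw [Finset.disjoint_union_right, Finset.disjoint_union_right] at dR
  exact ⟨T, X, R, hTc, hXc, hRc, dTX, dR.1.2.symm, dR.2.symm, dTF, dXF, dR.1.1,
    fun x hx => edge_of_nbr hbT (hXn x hx)⟩

theorem connect {r d N : ℕ} {H G : Finset (Finset (Fin n))}
    (hdeg : ∀ S : Finset (Fin n), S.card = r + 1 → d ≤ (nbrS H S).card) (hdn : d ≤ n)
    (hP : PRP G N (r+2))
    {b v : Fin n} {F : Finset (Fin n)} (hb : b ∈ F) (hv : v ∈ F)
    (hF : F.card + 2 * (r + N) + r * N ≤ d) :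
    ∃ (L : List (LDart n)) (M : Multiset (Fin n)), chn b L v ∧ (∀ e ∈ L, e.ok (H ∪ G)) ∧
      L.length = 3 ∧ vsL L = v ::ₘ M ∧ M.Nodup ∧ ∀ u ∈ M, u ∉ F := by
  obtain ⟨T', X', R', hT'c, hX'c, -, dTX', -, -, dTF', dXF', -, hE'⟩ :=
    reserve (N := N) hdeg hdn hv (by omega)
  obtain ⟨T, X, R, hTc, hXc, hRc, dTX, dTR, dXR, dTF, dXF, dRF, hE⟩ :=
    reserve (N := N) hdeg hdn (b := b) (F := F ∪ T' ∪ X') (by simp [hb]) (by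
      have h1 := Finset.card_union_le (F ∪ T') X'
      have h2 := Finset.card_union_le F T'
      omega)
  simp only [Finset.disjoint_union_right] at dTF dXF dRF
  obtain ⟨x, hx, y, hy, c, hc, hG⟩ := hP.use (fun _ => R) hXc.ge hX'c.ge dXF.2
    (fun _ => hRc.ge) (fun _ => dXR.symm) (fun _ => dRF.2)
  have hcnd : (Finset.univ.val.map c).Nodup := by
    have := hG.nodup
    simp only [Multiset.nodup_cons] at this
    exact this.2.2
  refine ⟨[⟨b, x, 0, T.val⟩, ⟨x, y, 0, Finset.univ.val.map c⟩, ⟨y, v, 0, T'.val⟩],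
    (x ::ₘ y ::ₘ (T.val + (univ.val.map c + T'.val))), ?_, ?_, rfl, ?_, ?_, ?_⟩
  · simp [chn]
  · intro e he
    simp only [List.mem_cons, List.not_mem_nil, or_false] at he
    rcases he with rfl | rfl | rfl
    · exact EdgeM.mono Finset.subset_union_left (by simpa using hE x hx)
    · exact EdgeM.mono Finset.subset_union_right (by simpa using hG)
    · refine EdgeM.mono Finset.subset_union_left ?_
      have := hE' y hy
      rw [Multiset.cons_swap] at this
      simpa using this
  · simp only [vsL, zero_add, add_zero]
    simp only [← Multiset.singleton_add]
    abel
  · have mc : ∀ u ∈ univ.val.map c, u ∈ R := by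
      intro u hu
      obtain ⟨j, _, rfl⟩ := Multiset.mem_map.1 hu
      exact hc j
    rw [Finset.disjoint_left] at *
    rw [Multiset.nodup_cons, Multiset.nodup_cons, Multiset.nodup_add, Multiset.nodup_add]
    refine ⟨?_, ?_, T.nodup, ⟨hcnd, T'.nodup, ?_⟩, ?_⟩
    · simp only [Multiset.mem_cons, Multiset.mem_add, Finset.mem_val, not_or]
      refine ⟨?_, fun h => dTX h hx, fun h => dXR hx (mc _ h), Finset.disjoint_left.1 dXF.1.2 hx⟩
      rintro rfl; exact (Finset.disjoint_left.1 dXF.2) hx hy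
    · simp only [Multiset.mem_add, Finset.mem_val, not_or]
      exact ⟨fun h => (Finset.disjoint_left.1 dTF.2) h hy, fun h => (Finset.disjoint_left.1 dRF.2) (mc _ h) hy, fun h => dTX' h hy⟩
    · rw [Multiset.disjoint_left]
      exact fun {a} ha hb => (Finset.disjoint_left.1 dRF.1.2) (mc _ ha) hb
    · rw [Multiset.disjoint_left]
      intro a ha hb
      rcases Multiset.mem_add.1 hb with h | h
      · exact dTR ha (mc _ h)
      · exact (Finset.disjoint_left.1 dTF.1.2) ha h
  · have mc : ∀ u ∈ univ.val.map c, u ∈ R := by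
      intro u hu
      obtain ⟨j, _, rfl⟩ := Multiset.mem_map.1 hu
      exact hc j
    intro u hu
    simp only [Multiset.mem_cons, Multiset.mem_add, Finset.mem_val] at hu
    rcases hu with rfl | rfl | h | h | h
    · exact Finset.disjoint_left.1 dXF.1.1 hx
    · exact Finset.disjoint_left.1 dXF' hy
    · exact Finset.disjoint_left.1 dTF.1.1 h
    · exact Finset.disjoint_left.1 dRF.1.1 (mc _ h)
    · exact Finset.disjoint_left.1 dTF' h

theorem gadget {r d D0 : ℕ} {H : Finset (Finset (Fin n))}
    (hdeg : ∀ S : Finset (Fin n), S.card = r + 1 → d ≤ (nbrS H S).card)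
    {γ : ℝ} (hγ0 : 0 ≤ γ) (hγ : γ * (n:ℝ)^2 ≤ (D0:ℝ)^2) (hD0 : 0 < D0)
    {F A : Finset (Fin n)} (hA : A.card = r) (hAF : Disjoint A F) (hF : F.card + D0 ≤ d)
    (hFn : F.card + r < n)
    (w : Fin n → ℝ) (hw : ∀ s, 0 ≤ w s) :
    ∃ v y, v ∉ F ∧ y ∉ F ∧ EdgeM H (v ::ₘ y ::ₘ A.val) ∧
      γ * ∑ s ∈ univ \ (F ∪ A), w s ≤
        ∑ s ∈ univ \ (F ∪ A), if EdgeM H (v ::ₘ s ::ₘ A.val) then w s else 0 := by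
  set P : Finset (Fin n × Fin n) := univ.filter (fun q => q.1 ∉ F ∧ q.1 ∉ A ∧ q.2 ∉ F ∧
    q.2 ∈ nbrS H (insert q.1 A)) with hP
  set S := univ \ (F ∪ A) with hS
  have hcount : ∀ s, s ∉ A → D0 ≤ (nbrS H (insert s A) \ F).card := by
    intro s hs
    have h1 := hdeg (insert s A) (by rw [Finset.card_insert_of_notMem hs, hA])
    have h2 := Finset.le_card_sdiff F (nbrS H (insert s A))
    omega
  have hPne : P.Nonempty := by
    have : (univ \ (F ∪ A)).Nonempty := by
      rw [← Finset.card_pos, Finset.card_sdiff_of_subset (Finset.subset_univ _), Finset.card_univ,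
        Fintype.card_fin]
      have := Finset.card_union_le F A
      omega
    obtain ⟨v, hv⟩ := this
    simp only [Finset.mem_sdiff, Finset.mem_union, not_or] at hv
    have h := hcount v hv.2.2
    obtain ⟨y, hy⟩ := Finset.card_pos.1 (lt_of_lt_of_le hD0 h)
    rw [Finset.mem_sdiff] at hy
    exact ⟨(v, y), by simp [hP, hv, hy]⟩
  have hPc : (P.card : ℝ) ≤ (n:ℝ)^2 := by
    have : P.card ≤ n * n := by
      simpa using Finset.card_le_univ P
    calc (P.card:ℝ) ≤ ((n*n : ℕ):ℝ) := by exact_mod_cast this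
      _ = _ := by push_cast; ring
  have hW : 0 ≤ ∑ s ∈ S, w s := Finset.sum_nonneg (fun s _ => hw s)
  have hq : ∀ s ∈ S, (D0:ℝ)^2 * w s ≤ ∑ q ∈ P, if EdgeM H (q.1 ::ₘ s ::ₘ A.val) then w s else 0 := by
    intro s hs
    simp only [hS, Finset.mem_sdiff, Finset.mem_union, not_or] at hs
    rw [← Finset.sum_filter, Finset.sum_const, nsmul_eq_mul]
    refine mul_le_mul_of_nonneg_right ?_ (hw s)
    have hsub : ((nbrS H (insert s A) \ F).sigma (fun v => nbrS H (insert v A) \ F)).image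
        (fun q => ((q.1, q.2) : Fin n × Fin n)) ⊆ P.filter (fun q => EdgeM H (q.1 ::ₘ s ::ₘ A.val)) := by
      intro q hq
      obtain ⟨⟨v, y⟩, h, rfl⟩ := Finset.mem_image.1 hq
      simp only [Finset.mem_sigma, Finset.mem_sdiff] at h
      have hvA : v ∉ A := by
        have := h.1.1
        simp only [nbrS, Finset.mem_filter, Finset.mem_insert, not_or] at this
        exact this.2.1.2
      have he := edge_of_nbr hs.2.2 h.1.1
      rw [Multiset.cons_swap] at he
      simp [hP, h, hvA, he]
    have hinj : Function.Injective (fun q : (_ : Fin n) × Fin n => ((q.1, q.2) : Fin n × Fin n)) := by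
      rintro ⟨a, b⟩ ⟨c, d⟩ h
      simp at h
      rw [h.1, h.2]
    have h1 := Finset.card_le_card hsub
    rw [Finset.card_image_of_injective _ hinj, Finset.card_sigma] at h1
    have h2 : D0 * D0 ≤ ∑ v ∈ nbrS H (insert s A) \ F, (nbrS H (insert v A) \ F).card := by
      calc D0 * D0 ≤ (nbrS H (insert s A) \ F).card * D0 := Nat.mul_le_mul_right _ (hcount s hs.2.2)
        _ = ∑ v ∈ nbrS H (insert s A) \ F, D0 := by rw [Finset.sum_const, smul_eq_mul]
        _ ≤ _ := by
          refine Finset.sum_le_sum (fun v hv => hcount v ?_)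
          have := (Finset.mem_sdiff.1 hv).1
          simp only [nbrS, Finset.mem_filter, Finset.mem_insert, not_or] at this
          exact this.2.1.2
    have h3 := h2.trans h1
    calc (D0:ℝ)^2 = ((D0*D0 : ℕ):ℝ) := by push_cast; ring
      _ ≤ _ := by exact_mod_cast h3
  have hsum : ∑ q ∈ P, γ * ∑ s ∈ S, w s ≤
      ∑ q ∈ P, ∑ s ∈ S, if EdgeM H (q.1 ::ₘ s ::ₘ A.val) then w s else 0 := by
    rw [Finset.sum_const, nsmul_eq_mul, Finset.sum_comm]
    calc (P.card:ℝ) * (γ * ∑ s ∈ S, w s) ≤ (n:ℝ)^2 * (γ * ∑ s ∈ S, w s) :=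
          mul_le_mul_of_nonneg_right hPc (by positivity)
      _ = (γ * (n:ℝ)^2) * ∑ s ∈ S, w s := by ring
      _ ≤ (D0:ℝ)^2 * ∑ s ∈ S, w s := mul_le_mul_of_nonneg_right hγ hW
      _ = ∑ s ∈ S, (D0:ℝ)^2 * w s := Finset.mul_sum _ _ _
      _ ≤ _ := Finset.sum_le_sum hq
  obtain ⟨q, hq, hle⟩ := Finset.exists_le_of_sum_le hPne hsum
  simp only [hP, Finset.mem_filter, Finset.mem_univ, true_and] at hq
  exact ⟨q.1, q.2, hq.1, hq.2.2.1, edge_of_nbr hq.2.1 hq.2.2.2, hle⟩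

def good1 (H : Finset (Finset (Fin n))) (s : Fin n) (d : LDart n) : Prop :=
  EdgeM H (d.x ::ₘ s ::ₘ (d.O + d.I))

def good2 (H : Finset (Finset (Fin n))) (s : Fin n) (d : LDart n) : Prop :=
  ∃ y, d.O = {y} ∧ EdgeM H (d.x ::ₘ d.z ::ₘ s ::ₘ d.I)

def Prov (H : Finset (Finset (Fin n))) (good : Fin n → LDart n → Prop) (ρ : ℝ) (f0 : ℕ) : Prop :=
  ∀ F : Finset (Fin n), F.card ≤ f0 → ∀ w : Fin n → ℝ, (∀ s, 0 ≤ w s) →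
    ∃ d : LDart n, d.ok H ∧ (∀ u ∈ d.x ::ₘ d.z ::ₘ (d.O + d.I), u ∉ F) ∧
      ∑ s ∈ univ \ (F ∪ (d.x ::ₘ d.z ::ₘ (d.O + d.I)).toFinset),
        w s * (if good s d then 1/2 else 1) ≤ ρ * ∑ s ∈ univ \ F, w s

theorem prov_aux {H : Finset (Finset (Fin n))} {γ : ℝ} (hγ1 : γ ≤ 1)
    {F A V : Finset (Fin n)} (hAV : A ⊆ V) {w : Fin n → ℝ} (hw : ∀ s, 0 ≤ w s)
    {g : Fin n → Prop} {v : Fin n} (hg : ∀ s, EdgeM H (v ::ₘ s ::ₘ A.val) → g s)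
    (h : γ * ∑ s ∈ univ \ (F ∪ A), w s ≤
        ∑ s ∈ univ \ (F ∪ A), if EdgeM H (v ::ₘ s ::ₘ A.val) then w s else 0) :
    ∑ s ∈ univ \ (F ∪ V), w s * (if g s then 1/2 else 1) ≤ (1 - γ/2) * ∑ s ∈ univ \ F, w s := by
  have h1 : ∑ s ∈ univ \ (F ∪ V), w s * (if g s then (1/2:ℝ) else 1) ≤
      ∑ s ∈ univ \ (F ∪ A), w s * (if g s then (1/2:ℝ) else 1) := by
    refine Finset.sum_le_sum_of_subset_of_nonneg ?_ ?_
    · exact Finset.sdiff_subset_sdiff (Finset.Subset.refl _) (Finset.union_subset_union (Finset.Subset.refl _) hAV)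
    · intro s _ _
      have := hw s
      split_ifs <;> linarith
  have h2 : ∑ s ∈ univ \ (F ∪ A), w s * (if g s then (1/2:ℝ) else 1) ≤
      ∑ s ∈ univ \ (F ∪ A), (w s - 1/2 * (if EdgeM H (v ::ₘ s ::ₘ A.val) then w s else 0)) := by
    refine Finset.sum_le_sum (fun s _ => ?_)
    have := hw s
    by_cases hs : EdgeM H (v ::ₘ s ::ₘ A.val)
    · simp only [hs, hg s hs, if_true]; linarith
    · simp only [hs, if_false]; split_ifs <;> linarith
  rw [Finset.sum_sub_distrib, ← Finset.mul_sum] at h2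
  have h3 : ∑ s ∈ univ \ (F ∪ A), w s ≤ ∑ s ∈ univ \ F, w s :=
    Finset.sum_le_sum_of_subset_of_nonneg
      (Finset.sdiff_subset_sdiff (Finset.Subset.refl _) Finset.subset_union_left) (fun s _ _ => hw s)
  have h4 := mul_le_mul_of_nonneg_left h3 (show 0 ≤ 1 - γ/2 by linarith)
  linarith

theorem exists_A {r : ℕ} {F : Finset (Fin n)} (h : F.card + r < n) :
    ∃ A : Finset (Fin n), A.card = r ∧ Disjoint A F := by
  obtain ⟨T, hT, hTc⟩ := Finset.exists_subset_card_eq (s := univ \ F) (n := r) (by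
    rw [Finset.card_sdiff_of_subset (Finset.subset_univ _), Finset.card_univ, Fintype.card_fin]; omega)
  exact ⟨T, hTc, Finset.disjoint_of_subset_left hT Finset.sdiff_disjoint⟩

theorem prov1 {r d D0 f0 : ℕ} {H : Finset (Finset (Fin n))}
    (hdeg : ∀ S : Finset (Fin n), S.card = r + 1 → d ≤ (nbrS H S).card)
    {γ : ℝ} (hγ0 : 0 ≤ γ) (hγ1 : γ ≤ 1) (hγ : γ * (n:ℝ)^2 ≤ (D0:ℝ)^2) (hD0 : 0 < D0)
    (hF : f0 + D0 ≤ d) (hFn : f0 + r < n) : Prov H (good1 H) (1 - γ/2) f0 := by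
  intro F hFc w hw
  obtain ⟨A, hA, hAF⟩ := exists_A (show F.card + r < n by omega)
  obtain ⟨v, y, hv, hy, he, hs⟩ := gadget hdeg hγ0 hγ hD0 hA hAF (by omega) (by omega) w hw
  refine ⟨⟨v, y, 0, A.val⟩, by simpa [LDart.ok] using he, ?_, ?_⟩
  · intro u hu
    simp only [zero_add, Multiset.mem_cons, Finset.mem_val] at hu
    rcases hu with rfl | rfl | h
    · exact hv
    · exact hy
    · exact Finset.disjoint_left.1 hAF h
  · refine prov_aux hγ1 (A := A) ?_ hw (v := v) ?_ hs
    · intro a ha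
      simp [ha]
    · intro s h
      simpa [good1] using h

theorem prov2 {r d D0 f0 : ℕ} {H : Finset (Finset (Fin n))}
    (hdeg : ∀ S : Finset (Fin n), S.card = r + 1 → d ≤ (nbrS H S).card) (hr : 0 < r)
    {γ : ℝ} (hγ0 : 0 ≤ γ) (hγ1 : γ ≤ 1) (hγ : γ * (n:ℝ)^2 ≤ (D0:ℝ)^2) (hD0 : 0 < D0)
    (hF : f0 + D0 ≤ d) (hFn : f0 + r < n) : Prov H (good2 H) (1 - γ/2) f0 := by
  intro F hFc w hw
  obtain ⟨A, hA, hAF⟩ := exists_A (show F.card + r < n by omega)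
  obtain ⟨v, y, hv, hy, he, hs⟩ := gadget hdeg hγ0 hγ hD0 hA hAF (by omega) (by omega) w hw
  obtain ⟨a, haA⟩ := Finset.card_pos.1 (hA ▸ hr)
  have hAe : A.val = a ::ₘ (A.erase a).val := by
    rw [← Finset.insert_val_of_notMem (Finset.notMem_erase a A), Finset.insert_erase haA]
  have hvs : a ::ₘ v ::ₘ ({y} + (A.erase a).val) = v ::ₘ y ::ₘ A.val := by
    rw [hAe]
    simp only [← Multiset.singleton_add]
    abel
  refine ⟨⟨a, v, {y}, (A.erase a).val⟩, ?_, ?_, ?_⟩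
  · unfold LDart.ok
    simp only
    rw [hvs]; exact he
  · intro u hu
    simp only [hvs, Multiset.mem_cons, Finset.mem_val] at hu
    rcases hu with rfl | rfl | h
    · exact hv
    · exact hy
    · exact Finset.disjoint_left.1 hAF h
  · refine prov_aux hγ1 (A := A) ?_ hw (v := v) ?_ hs
    · simp only [hvs]
      intro a ha
      simp [ha]
    · intro s h
      refine ⟨y, rfl, ?_⟩
      have : a ::ₘ v ::ₘ s ::ₘ (A.erase a).val = v ::ₘ s ::ₘ A.val := by
        rw [hAe]
        simp only [← Multiset.singleton_add]
        abel
      simp only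
      rw [this]; exact h

noncomputable def cntL (good : Fin n → LDart n → Prop) (s : Fin n) (D : List (LDart n)) : ℕ :=
  D.countP (fun d => decide (good s d))

theorem build {r d N f0 : ℕ} {H G : Finset (Finset (Fin n))} (hH : H ⊆ kSets n (r+2))
    (hG : G ⊆ kSets n (r+2))
    (hdeg : ∀ S : Finset (Fin n), S.card = r + 1 → d ≤ (nbrS H S).card) (hdn : d ≤ n)
    (hP : PRP G N (r+2)) {good : Fin n → LDart n → Prop} {ρ : ℝ} (hρ : 0 ≤ ρ)
    (prov : Prov H good ρ f0)
    (hf0 : f0 + (r + 2) + 2 * (r + N) + r * N ≤ d)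
    {F0 : Finset (Fin n)} {b0 : Fin n} (hb0 : b0 ∈ F0) :
    ∀ m : ℕ, F0.card + 4 * (r+1) * m ≤ f0 →
      ∃ (D : List (LDart n)) (b : Fin n), chn b0 D b ∧ (∀ e ∈ D, e.ok (H ∪ G)) ∧ (vsL D).Nodup ∧
        (∀ u ∈ vsL D, u ∉ F0) ∧ D.length = 4 * m ∧
        ∑ s ∈ univ \ (F0 ∪ (vsL D).toFinset), ((1:ℝ)/2)^(cntL good s D) ≤ n * ρ^m := by
  intro m
  have hHG : H ∪ G ⊆ kSets n (r+2) := Finset.union_subset hH hG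
  induction m with
  | zero =>
    intro _
    refine ⟨[], b0, rfl, by simp, by simp [vsL], by simp [vsL], rfl, ?_⟩
    simp only [cntL, List.countP_nil, pow_zero, Finset.sum_const, nsmul_eq_mul, mul_one]
    have := Finset.card_le_univ (univ \ (F0 ∪ (vsL ([] : List (LDart n))).toFinset))
    rw [Fintype.card_fin] at this
    exact_mod_cast this
  | succ m ih =>
    intro hm
    obtain ⟨D, b, hch, hok, hnd, hF, hlen, hsum⟩ := ih (by nlinarith)
    have hcard := card_vsL hHG hok
    set F := F0 ∪ (vsL D).toFinset with hFdef
    have hFc : F.card ≤ F0.card + 4 * (r+1) * m := by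
      refine (Finset.card_union_le _ _).trans ?_
      have := Multiset.toFinset_card_le (vsL D)
      rw [hcard, hlen] at this
      have h2 : (r+1)*(4*m) = 4*(r+1)*m := by ring
      omega
    obtain ⟨g, gok, gF, gs⟩ := prov F (by nlinarith) (fun s => ((1:ℝ)/2)^(cntL good s D))
      (fun s => by positivity)
    set Vg := (g.x ::ₘ g.z ::ₘ (g.O + g.I)) with hVg
    have hVgc : Multiset.card Vg = r + 2 := EdgeM.card hH gok
    have gnd : Vg.Nodup := EdgeM.nodup gok
    have hbF : b ∈ F := by
      have := chn_end_mem hch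
      rcases Multiset.mem_cons.1 this with rfl | h
      · exact Finset.mem_union_left _ hb0
      · exact Finset.mem_union_right _ (by simpa using h)
    obtain ⟨L, M, Lch, Lok, Llen, Lvs, Mnd, hM⟩ := connect (N := N) hdeg hdn hP (b := b) (v := g.x)
      (F := F ∪ Vg.toFinset) (by simp [hbF]) (by simp [hVg]) (by
        have h1 := Finset.card_union_le F Vg.toFinset
        have h2 := Multiset.toFinset_card_le Vg
        nlinarith)
    have hvs : vsL (D ++ L ++ [g]) = vsL D + (Vg + M) := by
      rw [vsL_append, vsL_append, Lvs, hVg]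
      simp only [vsL, ← Multiset.singleton_add]
      abel
    refine ⟨D ++ L ++ [g], g.z, ?_, ?_, ?_, ?_, ?_, ?_⟩
    · rw [chn_append]
      refine ⟨g.x, chn_append.2 ⟨b, hch, Lch⟩, by simp [chn]⟩
    · intro e he
      simp only [List.mem_append, List.mem_singleton] at he
      rcases he with (h | h) | rfl
      · exact hok e h
      · exact Lok e h
      · exact gok.mono Finset.subset_union_left
    · rw [hvs, Multiset.nodup_add, Multiset.nodup_add]
      refine ⟨hnd, ⟨gnd, Mnd, ?_⟩, ?_⟩
      · rw [Multiset.disjoint_right]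
        intro u hu hu2
        exact hM u hu (by simp [hu2])
      · rw [Multiset.disjoint_right]
        intro u hu hu2
        rcases Multiset.mem_add.1 hu with h | h
        · exact gF u h (by simp [hFdef, hu2])
        · exact hM u h (by simp [hFdef, hu2])
    · intro u hu hu0
      rw [hvs] at hu
      rcases Multiset.mem_add.1 hu with h | h
      · exact hF u h hu0
      rcases Multiset.mem_add.1 h with h | h
      · exact gF u h (by simp [hFdef, hu0])
      · exact hM u h (by simp [hFdef, hu0])
    · simp [hlen, Llen]; ring
    · have hcnt : ∀ s, ((1:ℝ)/2)^(cntL good s (D ++ L ++ [g])) ≤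
          ((1:ℝ)/2)^(cntL good s D) * (if good s g then 1/2 else 1) := by
        intro s
        unfold cntL
        rw [List.countP_append, List.countP_append, pow_add, pow_add]
        have hx : ((1:ℝ)/2)^(List.countP (fun d => decide (good s d)) [g]) = (if good s g then 1/2 else 1) := by
          by_cases h : good s g <;> simp [h]
        rw [hx]
        have h1 : ((1:ℝ)/2)^(List.countP (fun d => decide (good s d)) L) ≤ 1 := pow_le_one₀ (by norm_num) (by norm_num)
        refine mul_le_mul_of_nonneg_right ?_ (by split_ifs <;> norm_num)
        exact mul_le_of_le_one_right (by positivity) h1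
      calc _ ≤ ∑ s ∈ univ \ (F0 ∪ (vsL (D ++ L ++ [g])).toFinset), ((1:ℝ)/2)^(cntL good s D) * (if good s g then 1/2 else 1) :=
            Finset.sum_le_sum (fun s _ => hcnt s)
        _ ≤ ∑ s ∈ univ \ (F ∪ Vg.toFinset), ((1:ℝ)/2)^(cntL good s D) * (if good s g then 1/2 else 1) := by
            refine Finset.sum_le_sum_of_subset_of_nonneg ?_ ?_
            · refine Finset.sdiff_subset_sdiff (Finset.Subset.refl _) ?_
              rw [hvs, hFdef]
              intro u hu
              simp only [Finset.mem_union, Multiset.mem_toFinset, Multiset.mem_add] at hu ⊢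
              tauto
            · intro s _ _
              split_ifs <;> positivity
        _ ≤ ρ * ∑ s ∈ univ \ F, ((1:ℝ)/2)^(cntL good s D) := gs
        _ ≤ ρ * (n * ρ^m) := mul_le_mul_of_nonneg_left hsum hρ
        _ = n * ρ^(m+1) := by ring

end build

open Finset
open scoped Classical

section dfs
variable {n : ℕ}

theorem dfs {r N : ℕ} {G : Finset (Finset (Fin n))} (hG : G ⊆ kSets n (r+2))
    (hP : PRP G N (r+2)) : ∀ (t : ℕ) (U : Finset (Fin n)), U.card = t →
    ∀ (D : List (LDart n)) (Z : Finset (Fin n)) (b a : Fin n), chn b D a → (∀ e ∈ D, e.ok G) →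
      (b ::ₘ vsL D).Nodup → (∀ v ∈ b ::ₘ vsL D, v ∉ U ∧ v ∉ Z) → Disjoint Z U →
      (∀ z ∈ Z, ∀ y ∈ U, ∀ I : Multiset (Fin n), (∀ i ∈ I, i ∈ U) → ¬ EdgeM G (z ::ₘ y ::ₘ I)) →
      Z.card ≤ N →
      ∃ (D' : List (LDart n)) (b' a' : Fin n), chn b' D' a' ∧ (∀ e ∈ D', e.ok G) ∧
        (b' ::ₘ vsL D').Nodup ∧ (∀ v ∈ b' ::ₘ vsL D', v ∈ U ∨ v ∈ b ::ₘ vsL D) ∧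
        Multiset.card (b ::ₘ vsL D) + U.card + (r+1) * Z.card ≤
          Multiset.card (b' ::ₘ vsL D') + (2*r+3) * N := by
  intro t
  induction t using Nat.strong_induction_on with
  | _ t ih =>
  intro U hU D
  induction D with
  | nil =>
    intro Z b a hch hok hnd hdis hZU hno hZN
    by_cases hbig : U.card < (r+2) * N
    · refine ⟨[], b, a, hch, hok, hnd, fun v hv => Or.inr hv, ?_⟩
      have : (2*r+3)*N = (r+1)*N + (r+2)*N := by ring
      have h2 : (r+1) * Z.card ≤ (r+1)*N := Nat.mul_le_mul_left _ hZN
      omega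
    push Not at hbig
    have hZlt : Z.card < N := by
      by_contra hcon
      push Not at hcon
      obtain ⟨Y, hY, hYc⟩ := Finset.exists_subset_card_eq (s := U) (n := N) (by nlinarith)
      obtain ⟨z, hz, y, hy, c, hc, he⟩ := hP.use (X := Z) (Y := Y) (fun _ => U \ Y) hcon hYc.ge
        (Finset.disjoint_of_subset_right hY hZU) (fun _ => by
          rw [Finset.card_sdiff_of_subset hY, hYc]
          have : (r+2)*N = r * N + 2 * N := by ring
          omega) (fun _ => (Finset.disjoint_of_subset_right Finset.sdiff_subset hZU).symm)
        (fun _ => Finset.sdiff_disjoint)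
      refine hno z hz y (hY hy) _ ?_ he
      intro i hi
      obtain ⟨j, _, rfl⟩ := Multiset.mem_map.1 hi
      exact (Finset.mem_sdiff.1 (hc j)).1
    by_cases hpush : ∃ y ∈ U, ∃ I : Multiset (Fin n), (∀ i ∈ I, i ∈ U) ∧ EdgeM G (b ::ₘ y ::ₘ I)
    · obtain ⟨y, hy, I, hI, he⟩ := hpush
      have hnde := he.nodup
      have hcde := he.card hG
      simp only [Multiset.card_cons] at hcde
      have hsub : insert y I.toFinset ⊆ U := by
        intro i hi
        rcases Finset.mem_insert.1 hi with rfl | h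
        · exact hy
        · exact hI i (by simpa using h)
      have hcI : (insert y I.toFinset).card = r + 1 := by
        simp only [Multiset.nodup_cons, Multiset.mem_cons, not_or] at hnde
        rw [Finset.card_insert_of_notMem (by simpa using hnde.2.1), Multiset.toFinset_card_of_nodup hnde.2.2]
        omega
      obtain ⟨D', b', a', h1, h2, h3, h4, h5⟩ := ih (U \ insert y I.toFinset).card (by
          rw [Finset.card_sdiff_of_subset hsub, hcI]
          have := Finset.card_le_card hsub
          omega) (U \ insert y I.toFinset) rfl [⟨y, b, 0, I⟩] Z y a (by simpa [chn] using hch)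
        (by
          intro e he'
          simp only [List.mem_singleton] at he'
          subst he'
          rw [Multiset.cons_swap] at he
          simpa [LDart.ok] using he)
        (by
          rw [Multiset.cons_swap] at he
          simpa [vsL] using he.nodup)
        (by
          intro v hv
          simp only [vsL, zero_add, add_zero, Multiset.mem_cons] at hv
          rcases hv with rfl | rfl | h
          · exact ⟨by simp, fun h => Finset.disjoint_left.1 hZU h hy⟩
          · have := hdis v (by simp [vsL])
            exact ⟨fun h => this.1 (Finset.mem_sdiff.1 h).1, this.2⟩
          · exact ⟨by simp [h], fun h' => Finset.disjoint_left.1 hZU h' (hI v h)⟩)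
        (Finset.disjoint_of_subset_right Finset.sdiff_subset hZU)
        (fun z hz y hy I hI => hno z hz y (Finset.sdiff_subset hy) I
          (fun i hi => Finset.sdiff_subset (hI i hi))) hZN
      refine ⟨D', b', a', h1, h2, h3, ?_, ?_⟩
      · intro v hv
        rcases h4 v hv with h | h
        · exact Or.inl (Finset.sdiff_subset h)
        · simp only [vsL, zero_add, add_zero, Multiset.mem_cons] at h
          rcases h with rfl | rfl | h
          · exact Or.inl hy
          · exact Or.inr (by simp)
          · exact Or.inl (hI v h)
      · rw [Finset.card_sdiff_of_subset hsub, hcI] at h5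
        have := Finset.card_le_card hsub
        simp [vsL] at h5 ⊢
        omega
    · have hUne : U.Nonempty := by
        rw [← Finset.card_pos]
        nlinarith
      obtain ⟨u, hu⟩ := hUne
      have hbU := hdis b (by simp)
      have hsub : U.erase u ⊆ U := Finset.erase_subset _ _
      obtain ⟨D', b', a', h1, h2, h3, h4, h5⟩ := ih (U.erase u).card (by
          rw [← hU]; exact Finset.card_erase_lt_of_mem hu) (U.erase u) rfl [] (insert b Z) u u rfl (by simp)
        (by simp [vsL])
        (by
          intro v hv
          simp only [vsL, Multiset.mem_cons, Multiset.notMem_zero, or_false] at hv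
          subst hv
          refine ⟨by simp, ?_⟩
          simp only [Finset.mem_insert, not_or]
          exact ⟨fun h => hbU.1 (h ▸ hu), fun h => Finset.disjoint_left.1 hZU h hu⟩)
        (by
          rw [Finset.disjoint_insert_left]
          exact ⟨fun h => hbU.1 (hsub h), Finset.disjoint_of_subset_right hsub hZU⟩)
        (by
          intro z hz y hy I hI he
          rcases Finset.mem_insert.1 hz with rfl | hz
          · exact hpush ⟨y, hsub hy, I, fun i hi => hsub (hI i hi), he⟩
          · exact hno z hz y (hsub hy) I (fun i hi => hsub (hI i hi)) he)
        (by rw [Finset.card_insert_of_notMem hbU.2]; omega)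
      refine ⟨D', b', a', h1, h2, h3, ?_, ?_⟩
      · intro v hv
        rcases h4 v hv with h | h
        · exact Or.inl (hsub h)
        · simp only [vsL, Multiset.mem_cons, Multiset.notMem_zero, or_false] at h
          subst h
          exact Or.inl hu
      · rw [Finset.card_insert_of_notMem hbU.2, Finset.card_erase_of_mem hu] at h5
        have hU1 : 0 < U.card := Finset.card_pos.2 ⟨u, hu⟩
        have h6 : (r+1) * (Z.card + 1) = (r+1) * Z.card + (r + 1) := by ring
        simp [vsL] at h5 ⊢
        omega
  | cons d D ihD =>
    intro Z b a hch hok hnd hdis hZU hno hZN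
    by_cases hbig : U.card < (r+2) * N
    · refine ⟨d :: D, b, a, hch, hok, hnd, fun v hv => Or.inr hv, ?_⟩
      have : (2*r+3)*N = (r+1)*N + (r+2)*N := by ring
      have h2 : (r+1) * Z.card ≤ (r+1)*N := Nat.mul_le_mul_left _ hZN
      omega
    push Not at hbig
    have hZlt : Z.card < N := by
      by_contra hcon
      push Not at hcon
      obtain ⟨Y, hY, hYc⟩ := Finset.exists_subset_card_eq (s := U) (n := N) (by nlinarith)
      obtain ⟨z, hz, y, hy, c, hc, he⟩ := hP.use (X := Z) (Y := Y) (fun _ => U \ Y) hcon hYc.ge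
        (Finset.disjoint_of_subset_right hY hZU) (fun _ => by
          rw [Finset.card_sdiff_of_subset hY, hYc]
          have : (r+2)*N = r * N + 2 * N := by ring
          omega) (fun _ => (Finset.disjoint_of_subset_right Finset.sdiff_subset hZU).symm)
        (fun _ => Finset.sdiff_disjoint)
      refine hno z hz y (hY hy) _ ?_ he
      intro i hi
      obtain ⟨j, _, rfl⟩ := Multiset.mem_map.1 hi
      exact (Finset.mem_sdiff.1 (hc j)).1
    by_cases hpush : ∃ y ∈ U, ∃ I : Multiset (Fin n), (∀ i ∈ I, i ∈ U) ∧ EdgeM G (b ::ₘ y ::ₘ I)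
    · obtain ⟨y, hy, I, hI, he⟩ := hpush
      have hnde := he.nodup
      have hcde := he.card hG
      simp only [Multiset.card_cons] at hcde
      have hsub : insert y I.toFinset ⊆ U := by
        intro i hi
        rcases Finset.mem_insert.1 hi with rfl | h
        · exact hy
        · exact hI i (by simpa using h)
      have hcI : (insert y I.toFinset).card = r + 1 := by
        simp only [Multiset.nodup_cons, Multiset.mem_cons, not_or] at hnde
        rw [Finset.card_insert_of_notMem (by simpa using hnde.2.1), Multiset.toFinset_card_of_nodup hnde.2.2]
        omega
      have hvs : y ::ₘ vsL (⟨y, b, 0, I⟩ :: d :: D) = (y ::ₘ I) + (b ::ₘ vsL (d :: D)) := by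
        simp only [vsL, ← Multiset.singleton_add]
        abel
      obtain ⟨D', b', a', h1, h2, h3, h4, h5⟩ := ih (U \ insert y I.toFinset).card (by
          rw [Finset.card_sdiff_of_subset hsub, hcI]
          have := Finset.card_le_card hsub
          omega) (U \ insert y I.toFinset) rfl (⟨y, b, 0, I⟩ :: d :: D) Z y a ⟨rfl, hch⟩
        (by
          intro e he'
          rcases List.mem_cons.1 he' with rfl | h
          · rw [Multiset.cons_swap] at he
            simpa [LDart.ok] using he
          · exact hok e h)
        (by
          rw [hvs, Multiset.nodup_add]
          refine ⟨(Multiset.nodup_cons.1 hnde).2, hnd, ?_⟩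
          rw [Multiset.disjoint_left]
          intro v hv hv2
          refine (hdis v hv2).1 (hsub ?_)
          simpa using hv)
        (by
          intro v hv
          rw [hvs] at hv
          rcases Multiset.mem_add.1 hv with h | h
          · have h' : v ∈ insert y I.toFinset := by simpa using h
            exact ⟨fun h2 => (Finset.mem_sdiff.1 h2).2 h', fun h2 => Finset.disjoint_left.1 hZU h2 (hsub h')⟩
          · have := hdis v h
            exact ⟨fun h => this.1 (Finset.mem_sdiff.1 h).1, this.2⟩)
        (Finset.disjoint_of_subset_right Finset.sdiff_subset hZU)
        (fun z hz y hy I hI => hno z hz y (Finset.sdiff_subset hy) I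
          (fun i hi => Finset.sdiff_subset (hI i hi))) hZN
      refine ⟨D', b', a', h1, h2, h3, ?_, ?_⟩
      · intro v hv
        rcases h4 v hv with h | h
        · exact Or.inl (Finset.sdiff_subset h)
        · rw [hvs] at h
          rcases Multiset.mem_add.1 h with h | h
          · exact Or.inl (hsub (by simpa using h))
          · exact Or.inr h
      · rw [Finset.card_sdiff_of_subset hsub, hcI, hvs, Multiset.card_add, Multiset.card_cons] at h5
        have := Finset.card_le_card hsub
        omega
    · have hbU := hdis b (by simp)
      obtain ⟨hd1, hd2⟩ := hch
      have hvs : b ::ₘ vsL (d :: D) = (b ::ₘ (d.O + d.I)) + (d.z ::ₘ vsL D) := by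
        simp only [vsL, ← Multiset.singleton_add]
        abel
      have hcd := (hok d (by simp)).card hG
      simp only [Multiset.card_cons] at hcd
      rw [hvs] at hnd hdis
      rw [Multiset.nodup_add, Multiset.disjoint_left] at hnd
      obtain ⟨D', b', a', h1, h2, h3, h4, h5⟩ := ihD (insert b Z) d.z a hd2
        (fun e he => hok e (List.mem_cons_of_mem _ he)) hnd.2.1
        (by
          intro v hv
          have := hdis v (Multiset.mem_add.2 (Or.inr hv))
          refine ⟨this.1, ?_⟩
          simp only [Finset.mem_insert, not_or]
          refine ⟨?_, this.2⟩
          rintro rfl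
          exact hnd.2.2 (by simp) hv)
        (by
          rw [Finset.disjoint_insert_left]
          exact ⟨hbU.1, hZU⟩)
        (by
          intro z hz y hy I hI he
          rcases Finset.mem_insert.1 hz with rfl | hz
          · exact hpush ⟨y, hy, I, hI, he⟩
          · exact hno z hz y hy I hI he)
        (by rw [Finset.card_insert_of_notMem hbU.2]; omega)
      refine ⟨D', b', a', h1, h2, h3, ?_, ?_⟩
      · intro v hv
        rcases h4 v hv with h | h
        · exact Or.inl h
        · rw [hvs]
          exact Or.inr (Multiset.mem_add.2 (Or.inr h))
      · rw [Finset.card_insert_of_notMem hbU.2] at h5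
        have h6 : (r+1) * (Z.card + 1) = (r+1) * Z.card + (r + 1) := by ring
        rw [hvs, Multiset.card_add, Multiset.card_cons]
        omega

theorem long_path {r N : ℕ} {G : Finset (Finset (Fin n))} (hG : G ⊆ kSets n (r+2))
    (hP : PRP G N (r+2)) {V : Finset (Fin n)} (hV : V.Nonempty) :
    ∃ (D : List (LDart n)) (b a : Fin n), chn b D a ∧ (∀ e ∈ D, e.ok G) ∧
        (b ::ₘ vsL D).Nodup ∧ (∀ v ∈ b ::ₘ vsL D, v ∈ V) ∧
        V.card ≤ (r+1) * D.length + 1 + (2*r+3) * N := by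
  obtain ⟨u, hu⟩ := hV
  obtain ⟨D, b, a, h1, h2, h3, h4, h5⟩ := dfs hG hP _ (V.erase u) rfl [] ∅ u u rfl (by simp)
    (by simp [vsL]) (by simp [vsL]) (by simp) (by simp) (by simp)
  refine ⟨D, b, a, h1, h2, h3, ?_, ?_⟩
  · intro v hv
    rcases h4 v hv with h | h
    · exact Finset.erase_subset _ _ h
    · simp only [vsL, Multiset.mem_cons, Multiset.notMem_zero, or_false] at h
      exact h ▸ hu
  · have := Finset.card_erase_of_mem hu
    have hpos : 0 < V.card := Finset.card_pos.2 ⟨u, hu⟩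
    simp only [Multiset.card_cons, card_vsL hG h2, vsL] at h5
    simp at h5
    omega

theorem map_z_le (D : List (LDart n)) : ((D.map LDart.z : List (Fin n)) : Multiset (Fin n)) ≤ vsL D := by
  induction D with
  | nil => simp [vsL]
  | cons d D ih =>
    simp only [List.map_cons, vsL]
    rw [← Multiset.cons_coe, Multiset.cons_add]
    refine Multiset.cons_le_cons _ (ih.trans (Multiset.le_add_left _ _))

theorem card_image_z {D : List (LDart n)} (h : (vsL D).Nodup) :
    ((D.map LDart.z).toFinset).card = D.length := by
  rw [List.toFinset_card_of_nodup, List.length_map]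
  exact Multiset.coe_nodup.1 (Multiset.nodup_of_le (map_z_le D) h)

/-- From a long path, between sets of possible endpoints. -/
theorem long_path_close {r N : ℕ} {G : Finset (Finset (Fin n))} (hG : G ⊆ kSets n (r+2))
    (hP : PRP G N (r+2)) {V X R X' R' : Finset (Fin n)}
    (hV : (r+1) * (2 * N) + 1 + (2*r+3) * N < V.card)
    (hX : X.card = N) (hX' : X'.card = N) (hR : R.card = r * N) (hR' : R'.card = r * N)
    (dXV : Disjoint X V) (dXV' : Disjoint X' V) (dRV : Disjoint R V) (dRV' : Disjoint R' V)
    (dXR : Disjoint X R) (dXR' : Disjoint X' R') (dXX : Disjoint X X')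
    (dXR2 : Disjoint X R') (dXR2' : Disjoint X' R) (dRR : Disjoint R R') :
    ∃ (D : List (LDart n)) (x x' : Fin n) (M : Multiset (Fin n)), x ∈ X ∧ x' ∈ X' ∧ chn x D x' ∧ (∀ e ∈ D, e.ok G) ∧
      vsL D = x' ::ₘ M ∧ M.Nodup ∧ (∀ u ∈ M, u ∈ V ∪ R ∪ R') ∧
      V.card ≤ (r+1) * (D.length + 2 * N) + 1 + (2*r+3) * N := by
  obtain ⟨D, b, a, hch, hok, hnd, hDV, hlen⟩ := long_path hG hP (V := V) (by
    rw [← Finset.card_pos]; omega)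
  have hl : 2 * N < D.length := by
    by_contra hcon
    push Not at hcon
    have := Nat.mul_le_mul_left (r+1) hcon
    omega
  obtain ⟨L1, D1, rfl, hL1⟩ : ∃ L1 D1, D = L1 ++ D1 ∧ L1.length = N :=
    ⟨D.take N, D.drop N, by simp, by simp; omega⟩
  obtain ⟨L2, L3, rfl, hL3⟩ : ∃ L2 L3, D1 = L2 ++ L3 ∧ L3.length = N := by
    simp at hl
    exact ⟨D1.take (D1.length - N), D1.drop (D1.length - N), by simp, by simp; omega⟩
  simp only [List.length_append] at hl hlen
  have hnd1 : (vsL (L1 ++ (L2 ++ L3))).Nodup := (Multiset.nodup_cons.1 hnd).2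
  have hDV1 : ∀ v ∈ vsL (L1 ++ (L2 ++ L3)), v ∈ V := fun v hv => hDV v (Multiset.mem_cons_of_mem hv)
  simp only [vsL_append] at hnd1 hDV1
  have hnd2 := hnd1
  rw [Multiset.nodup_add, Multiset.nodup_add] at hnd1
  have mz : ∀ (L : List (LDart n)) u, u ∈ (L.map LDart.z).toFinset → u ∈ vsL L := by
    intro L u hu
    exact Multiset.mem_of_le (map_z_le L) (by simpa using hu)
  obtain ⟨x, hx, u, hu, c, hc, he⟩ := hP.use (X := X) (Y := (L1.map LDart.z).toFinset) (fun _ => R) hX.ge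
    (by rw [card_image_z hnd1.1, hL1]) (by
      rw [Finset.disjoint_left] at *
      exact fun _ h1 h2 => dXV h1 (hDV1 _ (by simp [mz L1 _ h2]))) (fun _ => hR.ge) (fun _ => dXR.symm) (fun _ => by
      rw [Finset.disjoint_left] at *
      exact fun _ h1 h2 => dRV h1 (hDV1 _ (by simp [mz L1 _ h2])))
  obtain ⟨x', hx', u', hu', c', hc', he'⟩ := hP.use (X := X') (Y := (L3.map LDart.z).toFinset) (fun _ => R') hX'.ge
    (by rw [card_image_z hnd1.2.1.2.1, hL3]) (by
      rw [Finset.disjoint_left] at *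
      exact fun _ h1 h2 => dXV' h1 (hDV1 _ (by simp [mz L3 _ h2]))) (fun _ => hR'.ge) (fun _ => dXR'.symm) (fun _ => by
      rw [Finset.disjoint_left] at *
      exact fun _ h1 h2 => dRV' h1 (hDV1 _ (by simp [mz L3 _ h2])))
  have hcR : ∀ i ∈ univ.val.map c, i ∈ R := by
    intro i hi
    obtain ⟨j, _, rfl⟩ := Multiset.mem_map.1 hi
    exact hc j
  have hcR' : ∀ i ∈ univ.val.map c', i ∈ R' := by
    intro i hi
    obtain ⟨j, _, rfl⟩ := Multiset.mem_map.1 hi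
    exact hc' j
  simp only [List.mem_toFinset, List.mem_map] at hu hu'
  obtain ⟨d, hd, rfl⟩ := hu
  obtain ⟨d', hd', rfl⟩ := hu'
  obtain ⟨P, Q, rfl⟩ := List.append_of_mem hd
  obtain ⟨P', Q', rfl⟩ := List.append_of_mem hd'
  simp only [chn_append, chn] at hch
  obtain ⟨b1, ⟨b2, h1, h2, h3⟩, b3, h4, b4, h5, h6, h7⟩ := hch
  have hle : d.z ::ₘ vsL (Q ++ (L2 ++ (P' ++ [d']))) ≤ vsL (P ++ d :: Q) + (vsL L2 + vsL (P' ++ d' :: Q')) := by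
    rw [Multiset.le_iff_exists_add]
    refine ⟨vsL P + (d.O + d.I) + vsL Q', ?_⟩
    simp only [vsL_append, vsL, ← Multiset.singleton_add]
    abel
  have hvs : vsL (⟨x, d.z, 0, univ.val.map c⟩ :: (Q ++ (L2 ++ (P' ++ [d'])) ++ [⟨d'.z, x', 0, univ.val.map c'⟩])) =
      x' ::ₘ (univ.val.map c + (univ.val.map c' + (d.z ::ₘ vsL (Q ++ (L2 ++ (P' ++ [d'])))))) := by
    simp only [vsL_append, vsL, ← Multiset.singleton_add]
    abel
  refine ⟨_, x, x', _, hx, hx', ?_, ?_, hvs, ?_, ?_, ?_⟩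
  · refine ⟨rfl, ?_⟩
    simp only [chn_append, chn]
    refine ⟨d'.z, ⟨b1, h3, b3, h4, b4, h5, h6, rfl⟩, rfl, trivial⟩
  · intro e hee
    simp only [List.mem_cons, List.mem_append, List.not_mem_nil, or_false] at hee
    rcases hee with rfl | (h | h | h | rfl) | rfl
    · simpa [LDart.ok] using he
    · exact hok e (by simp [h])
    · exact hok e (by simp [h])
    · exact hok e (by simp [h])
    · exact hok e (by simp)
    · rw [Multiset.cons_swap] at he'
      simpa [LDart.ok] using he'
  · have n1 := he.nodup
    have n2 := he'.nodup
    simp only [Multiset.nodup_cons] at n1 n2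
    rw [Multiset.nodup_add, Multiset.nodup_add]
    refine ⟨n1.2.2, ⟨n2.2.2, Multiset.nodup_of_le hle hnd2, ?_⟩, ?_⟩
    · rw [Multiset.disjoint_left]
      intro i hi hi2
      have := hDV1 i (Multiset.mem_of_le hle hi2)
      exact Finset.disjoint_left.1 dRV' (hcR' i hi) this
    · rw [Multiset.disjoint_left]
      intro i hi hi2
      rcases Multiset.mem_add.1 hi2 with h | h
      · exact Finset.disjoint_left.1 dRR (hcR i hi) (hcR' i h)
      · have := hDV1 i (Multiset.mem_of_le hle h)
        exact Finset.disjoint_left.1 dRV (hcR i hi) this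
  · intro i hi
    simp only [Finset.mem_union]
    rcases Multiset.mem_add.1 hi with h | h
    · exact Or.inl (Or.inr (hcR i h))
    rcases Multiset.mem_add.1 h with h | h
    · exact Or.inr (hcR' i h)
    · exact Or.inl (Or.inl (hDV1 i (Multiset.mem_of_le hle h)))
  · simp only [List.length_append, List.length_cons, List.length_nil] at hL1 hL3 hlen ⊢
    refine hlen.trans ?_
    have : (r+1) * (P.length + (Q.length + 1) + (L2.length + (P'.length + (Q'.length + 1)))) ≤
      (r+1) * (Q.length + (L2.length + (P'.length + (0+1))) + (0+1) + 1 + 2 * N) := Nat.mul_le_mul_left _ (by omega)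
    omega

end dfs

open Finset
open scoped Classical

section absorb
variable {n : ℕ}

theorem swap_one {H E : Finset (Finset (Fin n))} (hHE : H ⊆ E) {a b : Fin n} {D : List (LDart n)}
    (hch : chn a D b) (hok : ∀ e ∈ D, e.ok E) {d : LDart n} (hd : d ∈ D) {w y : Fin n}
    (hO : d.O = {y}) (he : EdgeM H (d.x ::ₘ d.z ::ₘ w ::ₘ d.I)) :
    ∃ D' : List (LDart n), chn a D' b ∧ (∀ e ∈ D', e.ok E) ∧
      y ::ₘ vsL D' = w ::ₘ vsL D ∧ (∀ s, cntL (good2 H) s D' = cntL (good2 H) s D) ∧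
      ∀ d' ∈ D, d'.O ≠ {y} → d' ∈ D' := by
  obtain ⟨P, Q, rfl⟩ := List.append_of_mem hd
  refine ⟨P ++ ⟨d.x, d.z, {w}, d.I⟩ :: Q, ?_, ?_, ?_, ?_, ?_⟩
  · simp only [chn_append, chn] at hch ⊢
    exact hch
  · intro e hee
    simp only [List.mem_append, List.mem_cons] at hee
    rcases hee with h | rfl | h
    · exact hok e (by simp [h])
    · unfold LDart.ok
      simp only [Multiset.singleton_add]
      exact he.mono hHE
    · exact hok e (by simp [h])
  · simp only [vsL_append, vsL, hO, ← Multiset.singleton_add]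
    abel
  · intro s
    have : good2 H s ⟨d.x, d.z, {w}, d.I⟩ ↔ good2 H s d := by
      unfold good2
      simp [hO]
    simp only [cntL, List.countP_append, List.countP_cons, this]
  · intro d' hd' hne
    simp only [List.mem_append, List.mem_cons] at hd' ⊢
    rcases hd' with h | rfl | h
    · exact Or.inl h
    · exact absurd hO hne
    · exact Or.inr (Or.inr h)

theorem swap_list {H E : Finset (Finset (Fin n))} (hHE : H ⊆ E) {a b : Fin n}
    (ps : List (Fin n × Fin n)) : ∀ {D : List (LDart n)}, chn a D b → (∀ e ∈ D, e.ok E) →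
    (∀ p ∈ ps, ∃ d ∈ D, d.O = {p.2} ∧ EdgeM H (d.x ::ₘ d.z ::ₘ p.1 ::ₘ d.I)) →
    (ps.map Prod.snd).Nodup →
    ∃ D' : List (LDart n), chn a D' b ∧ (∀ e ∈ D', e.ok E) ∧
      ((ps.map Prod.snd : List (Fin n)) : Multiset (Fin n)) + vsL D' =
        ((ps.map Prod.fst : List (Fin n)) : Multiset (Fin n)) + vsL D ∧
      (∀ s, cntL (good2 H) s D' = cntL (good2 H) s D) := by
  induction ps with
  | nil =>
    intro D h1 h2 _ _
    exact ⟨D, h1, h2, by simp, fun _ => rfl⟩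
  | cons p ps ih =>
    intro D h1 h2 h3 h4
    simp only [List.map_cons, List.nodup_cons] at h4
    obtain ⟨d, hd, hO, he⟩ := h3 p (by simp)
    obtain ⟨D1, c1, c2, c3, c4, c5⟩ := swap_one hHE h1 h2 hd hO he
    obtain ⟨D2, e1, e2, e3, e4⟩ := ih c1 c2 (by
      intro q hq
      obtain ⟨d', hd', hO', he'⟩ := h3 q (by simp [hq])
      refine ⟨d', c5 d' hd' ?_, hO', he'⟩
      rw [hO']
      intro h
      have := Multiset.singleton_inj.1 h
      exact h4.1 (this ▸ List.mem_map_of_mem hq)) h4.2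
    refine ⟨D2, e1, e2, ?_, fun s => (e4 s).trans (c4 s)⟩
    simp only [List.map_cons, ← Multiset.cons_coe]
    rw [Multiset.cons_add, e3, Multiset.cons_add, ← Multiset.add_cons, c3, Multiset.add_cons]

/-- symmetric count of good darts -/
noncomputable def cs1 (H : Finset (Finset (Fin n))) (s : Fin n) (D : List (LDart n)) : ℕ :=
  cntL (good1 H) s D + cntL (fun s d => good1 H s d.flip) s D

theorem cs1_append (H : Finset (Finset (Fin n))) (s : Fin n) (D D' : List (LDart n)) :
    cs1 H s (D ++ D') = cs1 H s D + cs1 H s D' := by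
  simp only [cs1, cntL, List.countP_append]
  omega

theorem cs1_cons_le (H : Finset (Finset (Fin n))) (s : Fin n) (d : LDart n) (D : List (LDart n)) :
    cs1 H s (d :: D) ≤ cs1 H s D + 2 := by
  simp only [cs1, cntL, List.countP_cons]
  split_ifs <;> omega

theorem le_cs1_cons (H : Finset (Finset (Fin n))) (s : Fin n) (d : LDart n) (D : List (LDart n)) :
    cs1 H s D ≤ cs1 H s (d :: D) := by
  simp only [cs1, cntL, List.countP_cons]
  omega

theorem cntL_rev (H : Finset (Finset (Fin n))) (s : Fin n) (D : List (LDart n)) :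
    cntL (good1 H) s (revL D) = cntL (fun s d => good1 H s d.flip) s D := by
  simp only [cntL, revL, List.countP_reverse, List.countP_map]
  rfl

theorem cs1_rev (H : Finset (Finset (Fin n))) (s : Fin n) (D : List (LDart n)) :
    cs1 H s (revL D) = cs1 H s D := by
  have h1 := cntL_rev H s D
  have h2 := cntL_rev H s (revL D)
  rw [revL_revL] at h2
  unfold cs1
  omega

/-- insertion of one vertex -/
theorem insert_one {H E : Finset (Finset (Fin n))} (hHE : H ⊆ E) {a b : Fin n} {D : List (LDart n)}
    (hch : chn a D b) (hok : ∀ e ∈ D, e.ok E) {d0 d1 : LDart n} (hd0 : d0 ∈ D) (hd1 : d1 ∈ D)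
    {w : Fin n} (hne : d0.z ≠ d1.z) (g0 : good1 H w d0) (g1 : good1 H w d1)
    {C : Multiset (Fin n)} (he : EdgeM E (d0.z ::ₘ d1.z ::ₘ C)) :
    ∃ D' : List (LDart n), chn a D' b ∧ (∀ e ∈ D', e.ok E) ∧ vsL D' = w ::ₘ (C + vsL D) ∧
      ∀ s, cs1 H s D ≤ cs1 H s D' + 4 := by
  have key : ∀ (d0 d1 : LDart n) (L1 L2 L3 : List (LDart n)), D = L1 ++ d0 :: (L2 ++ d1 :: L3) →
      good1 H w d0 → good1 H w d1 → EdgeM E (d0.z ::ₘ d1.z ::ₘ C) → 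
      ∃ D' : List (LDart n), chn a D' b ∧ (∀ e ∈ D', e.ok E) ∧ vsL D' = w ::ₘ (C + vsL D) ∧
      ∀ s, cs1 H s D ≤ cs1 H s D' + 4 := by
    rintro d0 d1 L1 L2 L3 rfl g0 g1 he
    simp only [chn_append, chn] at hch
    obtain ⟨a1, h1, h2, a3, h3, h4, h5⟩ := hch
    subst h4
    have hv := vsL_rev h3
    refine ⟨L1 ++ ⟨d0.x, w, d0.O, d0.I⟩ :: ⟨w, d1.x, d1.O, d1.I⟩ :: (revL L2 ++ ⟨d0.z, d1.z, 0, C⟩ :: L3),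
      ?_, ?_, ?_, ?_⟩
    · simp only [chn_append, chn]
      exact ⟨a1, h1, h2, trivial, _, chn_rev h3, rfl, h5⟩
    · intro e hee
      simp only [List.mem_append, List.mem_cons] at hee
      rcases hee with h | rfl | rfl | h | rfl | h
      · exact hok e (by simp [h])
      · exact EdgeM.mono hHE g0
      · unfold LDart.ok
        simp only
        rw [Multiset.cons_swap]
        exact EdgeM.mono hHE g1
      · exact ok_rev (fun d hd => hok d (by simp [hd])) e h
      · simpa [LDart.ok] using he
      · exact hok e (by simp [h])
    · simp only [vsL_append, vsL]
      have : vsL L1 + (w ::ₘ (d0.O + d0.I) + (d1.x ::ₘ (d1.O + d1.I) + (vsL (revL L2) + (d1.z ::ₘ (0 + C) + vsL L3))))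
        = (d1.x ::ₘ vsL (revL L2)) + (vsL L1 + (w ::ₘ (d0.O + d0.I)) + (d1.O + d1.I) + (d1.z ::ₘ C) + vsL L3) := by
        simp only [← Multiset.singleton_add]
        abel
      rw [this, ← hv]
      simp only [← Multiset.singleton_add]
      abel
    · intro s
      have e1 := cs1_cons_le H s d0 (L2 ++ d1 :: L3)
      have e2 := cs1_cons_le H s d1 L3
      have e3 := le_cs1_cons H s ⟨d0.x, w, d0.O, d0.I⟩ (⟨w, d1.x, d1.O, d1.I⟩ :: (revL L2 ++ ⟨d0.z, d1.z, 0, C⟩ :: L3))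
      have e4 := le_cs1_cons H s ⟨w, d1.x, d1.O, d1.I⟩ (revL L2 ++ ⟨d0.z, d1.z, 0, C⟩ :: L3)
      have e5 := le_cs1_cons H s ⟨d0.z, d1.z, 0, C⟩ L3
      have e6 := cs1_rev H s L2
      simp only [cs1_append] at e1 e3 e4 ⊢
      omega
  obtain ⟨P, Q, hPQ⟩ := List.append_of_mem hd0
  have : d1 ∈ P ∨ d1 ∈ Q := by
    rw [hPQ] at hd1
    simp only [List.mem_append, List.mem_cons] at hd1
    rcases hd1 with h | rfl | h
    · exact Or.inl h
    · exact absurd rfl hne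
    · exact Or.inr h
  rcases this with h | h
  · obtain ⟨P1, P2, rfl⟩ := List.append_of_mem h
    exact key d1 d0 P1 P2 Q (by simp [hPQ]) g1 g0 (by rwa [Multiset.cons_swap])
  · obtain ⟨P1, P2, rfl⟩ := List.append_of_mem h
    exact key d0 d1 P P1 P2 (by simp [hPQ]) g0 g1 he

theorem cand1_card {D : List (LDart n)} (h : (vsL D).Nodup) (p : LDart n → Bool) :
    (((D.filter p).map LDart.z).toFinset).card = D.countP p := by
  rw [List.toFinset_card_of_nodup, List.length_map, List.countP_eq_length_filter]
  have := Multiset.coe_nodup.1 (Multiset.nodup_of_le (map_z_le D) h)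
  exact this.sublist (List.filter_sublist.map _)

theorem cand2_card {D : List (LDart n)} (h : (vsL D).Nodup) (p : LDart n → Prop) :
    D.countP (fun d => decide (∃ y, d.O = {y} ∧ p d)) ≤
      (univ.filter (fun y : Fin n => ∃ d ∈ D, d.O = {y} ∧ p d)).card := by
  induction D with
  | nil => simp
  | cons d D ih =>
    simp only [vsL] at h
    rw [Multiset.nodup_add] at h
    have ih' := ih h.2.1
    rw [List.countP_cons]
    split_ifs with hp
    · simp only [decide_eq_true_eq] at hp
      obtain ⟨y, hy, hpd⟩ := hp
      have hnm : y ∉ univ.filter (fun y : Fin n => ∃ d ∈ D, d.O = {y} ∧ p d) := by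
        simp only [Finset.mem_filter, Finset.mem_univ, true_and, not_exists, not_and]
        intro d' hd' hO' _
        have m1 : y ∈ d.z ::ₘ (d.O + d.I) := by simp [hy]
        have m2 : y ∈ vsL D := mem_vsL hd' (by simp [hO'])
        exact Multiset.disjoint_left.1 h.2.2 m1 m2
      calc _ ≤ (univ.filter (fun y : Fin n => ∃ d ∈ D, d.O = {y} ∧ p d)).card + 1 := by omega
        _ = (insert y (univ.filter (fun y : Fin n => ∃ d ∈ D, d.O = {y} ∧ p d))).card := by
          rw [Finset.card_insert_of_notMem hnm]
        _ ≤ _ := by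
          refine Finset.card_le_card ?_
          intro u hu
          simp only [Finset.mem_insert, Finset.mem_filter, Finset.mem_univ, true_and] at hu ⊢
          rcases hu with rfl | ⟨d', hd', h'⟩
          · exact ⟨d, by simp, hy, hpd⟩
          · exact ⟨d', by simp [hd'], h'⟩
    · refine le_trans (by omega) (ih'.trans (Finset.card_le_card ?_))
      intro u hu
      simp only [Finset.mem_filter, Finset.mem_univ, true_and] at hu ⊢
      obtain ⟨d', hd', h'⟩ := hu
      exact ⟨d', by simp [hd'], h'⟩

theorem absorb_dir {r N : ℕ} {H G : Finset (Finset (Fin n))} (hP : PRP G N (r+2))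
    {a b b' c : Fin n} {DA DB : List (LDart n)} (hA : chn a DA b) (hB : chn b' DB c)
    (okA : ∀ e ∈ DA, e.ok (H ∪ G)) (okB : ∀ e ∈ DB, e.ok (H ∪ G))
    (hnd : (vsL DA + vsL DB).Nodup) {w : Fin n} {ws : Fin r → Fin n}
    (h1 : 2 * N ≤ cntL (good1 H) w DA) (h2 : ∀ j, r * N ≤ cntL (good2 H) (ws j) DB) :
    ∃ DA' DB' : List (LDart n), chn a DA' b ∧ chn b' DB' c ∧ (∀ e ∈ DA', e.ok (H ∪ G)) ∧
      (∀ e ∈ DB', e.ok (H ∪ G)) ∧ vsL DA' + vsL DB' = w ::ₘ (univ.val.map ws + (vsL DA + vsL DB)) ∧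
      (∀ s, cs1 H s DA ≤ cs1 H s DA' + 4) ∧
      (∀ s, cntL (good2 H) s DB' = cntL (good2 H) s DB) := by
  rw [Multiset.nodup_add] at hnd
  obtain ⟨ndA, ndB, ndAB⟩ := hnd
  set S1 := ((DA.filter (fun d => decide (good1 H w d))).map LDart.z).toFinset with hS1
  have hS1c : 2 * N ≤ S1.card := by
    rw [hS1, cand1_card ndA]; exact h1
  obtain ⟨X, hXS, hXc⟩ := Finset.exists_subset_card_eq (show N ≤ S1.card by omega)
  have hYc : N ≤ (S1 \ X).card := by
    have := Finset.le_card_sdiff X S1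
    omega
  set C : Fin r → Finset (Fin n) := fun j =>
    univ.filter (fun y : Fin n => ∃ d ∈ DB, d.O = {y} ∧ EdgeM H (d.x ::ₘ d.z ::ₘ ws j ::ₘ d.I)) with hC
  have hCc : ∀ j, r * N ≤ (C j).card := by
    intro j
    refine ((h2 j).trans (le_of_eq ?_)).trans (cand2_card ndB (fun d => EdgeM H (d.x ::ₘ d.z ::ₘ ws j ::ₘ d.I)))
    unfold cntL
    refine List.countP_congr ?_
    intro d _
    rw [decide_eq_true_iff, decide_eq_true_iff]
    rfl
  have hCS : ∀ j, Disjoint (C j) S1 := by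
    intro j
    rw [Finset.disjoint_left]
    intro y hy hy2
    simp only [hC, Finset.mem_filter, Finset.mem_univ, true_and] at hy
    obtain ⟨d, hd, hO, _⟩ := hy
    simp only [hS1, List.mem_toFinset, List.mem_map, List.mem_filter] at hy2
    obtain ⟨d', ⟨hd', _⟩, rfl⟩ := hy2
    have m1 : d'.z ∈ vsL DA := mem_vsL hd' (by simp)
    have m2 : d'.z ∈ vsL DB := mem_vsL hd (by simp [hO])
    exact Multiset.disjoint_left.1 ndAB m1 m2
  obtain ⟨x, hx, y, hy, cc, hcc, he⟩ := hP.use (X := X) (Y := S1 \ X) C hXc.ge hYc Finset.disjoint_sdiff hCc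
    (fun j => Finset.disjoint_of_subset_right hXS (hCS j))
    (fun j => Finset.disjoint_of_subset_right Finset.sdiff_subset (hCS j))
  have nd := he.nodup
  simp only [Multiset.nodup_cons] at nd
  have hx' := hXS hx
  have hy' := (Finset.mem_sdiff.1 hy).1
  simp only [hS1, List.mem_toFinset, List.mem_map, List.mem_filter, decide_eq_true_eq] at hx' hy'
  obtain ⟨d0, ⟨m0, g0⟩, rfl⟩ := hx'
  obtain ⟨d1, ⟨m1, g1⟩, rfl⟩ := hy'
  obtain ⟨DA', a1, a2, a3, a4⟩ := insert_one (H := H) Finset.subset_union_left hA okA m0 m1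
    (by
      intro h
      exact nd.1 (by simp [h])) g0 g1 (he.mono Finset.subset_union_right)
  obtain ⟨DB', b1, b2, b3, b4⟩ := swap_list (H := H) Finset.subset_union_left
    (List.ofFn (fun j => (ws j, cc j))) hB okB (by
      intro p hp
      rw [List.mem_ofFn] at hp
      obtain ⟨j, rfl⟩ := hp
      have := hcc j
      simp only [hC, Finset.mem_filter, Finset.mem_univ, true_and] at this
      exact this) (by
      have := nd.2.2
      rw [Fin.univ_val_map] at this
      rw [List.map_ofFn]
      exact Multiset.coe_nodup.1 this)
  refine ⟨DA', DB', a1, b1, a2, b2, ?_, a4, b4⟩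
  rw [List.map_ofFn, List.map_ofFn] at b3
  have b3' : univ.val.map cc + vsL DB' = univ.val.map ws + vsL DB := by
    rw [Fin.univ_val_map, Fin.univ_val_map]; exact b3
  rw [a3]
  have : w ::ₘ (univ.val.map cc + vsL DA) + vsL DB' = w ::ₘ (vsL DA + (univ.val.map cc + vsL DB')) := by
    simp only [← Multiset.singleton_add]
    abel
  rw [this, b3']
  simp only [← Multiset.singleton_add]
  abel

theorem absorb_step {r N : ℕ} {H G : Finset (Finset (Fin n))} (hP : PRP G N (r+2))
    {a b b' c : Fin n} {DA DB : List (LDart n)} (hA : chn a DA b) (hB : chn b' DB c)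
    (okA : ∀ e ∈ DA, e.ok (H ∪ G)) (okB : ∀ e ∈ DB, e.ok (H ∪ G))
    (hnd : (a ::ₘ (vsL DA + vsL DB)).Nodup) {w : Fin n} {ws : Fin r → Fin n}
    (h1 : 4 * N ≤ cs1 H w DA) (h2 : ∀ j, r * N ≤ cntL (good2 H) (ws j) DB) :
    ∃ DA' DB' : List (LDart n), chn a DA' b ∧ chn b' DB' c ∧ (∀ e ∈ DA', e.ok (H ∪ G)) ∧
      (∀ e ∈ DB', e.ok (H ∪ G)) ∧ vsL DA' + vsL DB' = w ::ₘ (univ.val.map ws + (vsL DA + vsL DB)) ∧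
      (∀ s, cs1 H s DA ≤ cs1 H s DA' + 4) ∧
      (∀ s, cntL (good2 H) s DB' = cntL (good2 H) s DB) := by
  by_cases hc : 2 * N ≤ cntL (good1 H) w DA
  · exact absorb_dir hP hA hB okA okB (Multiset.nodup_cons.1 hnd).2 hc h2
  · have hc' : 2 * N ≤ cntL (good1 H) w (revL DA) := by
      rw [cntL_rev]; unfold cs1 at h1; omega
    have hv := vsL_rev hA
    rw [← Multiset.cons_add, hv, Multiset.cons_add] at hnd
    obtain ⟨DA', DB', a1, a2, a3, a4, a5, a6, a7⟩ := absorb_dir hP (chn_rev hA) hB (ok_rev okA) okB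
      (Multiset.nodup_cons.1 hnd).2 hc' h2
    refine ⟨revL DA', DB', chn_rev a1, a2, ok_rev a3, a4, ?_, ?_, a7⟩
    · have hv' := vsL_rev a1
      rw [← Multiset.cons_inj_right a, ← Multiset.cons_add, ← hv', Multiset.cons_add, a5]
      have e1 : b ::ₘ w ::ₘ (univ.val.map ws + (vsL (revL DA) + vsL DB)) =
        w ::ₘ (univ.val.map ws + ((b ::ₘ vsL (revL DA)) + vsL DB)) := by
        simp only [← Multiset.singleton_add]
        abel
      rw [e1, ← hv]
      simp only [← Multiset.singleton_add]
      abel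
    · intro s
      rw [cs1_rev, ← cs1_rev H s DA]
      exact a6 s

theorem absorb_all {r N : ℕ} {H G : Finset (Finset (Fin n))} (hP : PRP G N (r+2))
    {a b b' c : Fin n} : ∀ (t : ℕ) (U : List (Fin n)) (DA DB : List (LDart n)),
    U.length = (r+1) * t → chn a DA b → chn b' DB c →
    (∀ e ∈ DA, e.ok (H ∪ G)) → (∀ e ∈ DB, e.ok (H ∪ G)) →
    ((U : Multiset (Fin n)) + (a ::ₘ (vsL DA + vsL DB))).Nodup →
    (∀ s ∈ U, 4 * N + 4 * t ≤ cs1 H s DA) → (∀ s ∈ U, r * (r * N) ≤ r * cntL (good2 H) s DB) →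
    ∃ DA' DB' : List (LDart n), chn a DA' b ∧ chn b' DB' c ∧ (∀ e ∈ DA', e.ok (H ∪ G)) ∧
      (∀ e ∈ DB', e.ok (H ∪ G)) ∧ vsL DA' + vsL DB' = (U : Multiset (Fin n)) + (vsL DA + vsL DB) := by
  intro t
  induction t with
  | zero =>
    intro U DA DB hU hA hB oA oB _ _ _
    have : U = [] := List.length_eq_zero_iff.1 (by simpa using hU)
    exact ⟨DA, DB, hA, hB, oA, oB, by simp [this]⟩
  | succ t ih =>
    intro U DA DB hU hA hB oA oB hnd h1 h2
    obtain ⟨w, U1, rfl⟩ : ∃ w U1, U = w :: U1 := by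
      cases U with
      | nil => simp at hU
      | cons w U1 => exact ⟨w, U1, rfl⟩
    simp only [List.length_cons] at hU
    have hU' : U1.length = r + (r+1) * t := by
      have : (r+1) * (t+1) = (r+1)*t + r + 1 := by ring
      omega
    obtain ⟨V, U2, rfl, hV⟩ : ∃ V U2, U1 = V ++ U2 ∧ V.length = r :=
      ⟨U1.take r, U1.drop r, by simp, by simp; omega⟩
    have hV2 : ∃ ws : Fin r → Fin n, List.ofFn ws = V := by
      subst hV
      exact ⟨_, List.ofFn_getElem⟩
    obtain ⟨ws, rfl⟩ := hV2
    obtain ⟨DA1, DB1, a1, a2, a3, a4, a5, a6, a7⟩ := absorb_step hP hA hB oA oB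
      (Multiset.nodup_of_le (Multiset.le_add_left _ _) hnd) (w := w) (ws := ws)
      (by have := h1 w (by simp); omega) (by
        intro j
        have := h2 (ws j) (by simp)
        exact Nat.le_of_mul_le_mul_left this (by have := j.2; omega))
    rw [Fin.univ_val_map] at a5
    obtain ⟨DA2, DB2, b1, b2, b3, b4, b5⟩ := ih U2 DA1 DB1 (by simp at hU'; omega) a1 a2 a3 a4
      (by
        rw [a5]
        refine Multiset.nodup_of_le (le_of_eq ?_) hnd
        simp only [← Multiset.cons_coe, ← Multiset.coe_add, ← Multiset.singleton_add]
        abel) (by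
        intro s hs
        have e1 := h1 s (by simp [hs])
        have e2 := a6 s
        omega) (by
        intro s hs
        rw [a7 s]
        exact h2 s (by simp [hs]))
    refine ⟨DA2, DB2, b1, b2, b3, b4, ?_⟩
    rw [b5, a5]
    simp only [← Multiset.cons_coe, ← Multiset.coe_add, ← Multiset.singleton_add]
    abel

end absorb

open Finset
open scoped Classical

section ham
variable {n : ℕ}

noncomputable def flL : List (LDart n) → List (Fin n)
  | [] => []
  | d :: D => (d.x :: (d.O + d.I).toList) ++ flL D

theorem flL_append (P Q : List (LDart n)) : flL (P ++ Q) = flL P ++ flL Q := by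
  induction P with
  | nil => simp [flL]
  | cons d D ih => simp [flL, ih]

theorem flL_coe {a b : Fin n} {D : List (LDart n)} (h : chn a D b) :
    b ::ₘ ((flL D : List (Fin n)) : Multiset (Fin n)) = a ::ₘ vsL D := by
  induction D generalizing a with
  | nil => simpa [flL, vsL, chn] using h.symm
  | cons d D ih =>
    obtain ⟨h1, h2⟩ := h
    have := ih h2
    simp only [flL, vsL]
    rw [← Multiset.coe_add, ← Multiset.cons_coe, Multiset.coe_toList]
    rw [← Multiset.add_cons, this, h1]
    simp only [← Multiset.singleton_add]
    abel

theorem flL_length {r : ℕ} {E : Finset (Finset (Fin n))} (hE : E ⊆ kSets n (r+2))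
    {D : List (LDart n)} (h : ∀ d ∈ D, d.ok E) : (flL D).length = (r+1) * D.length := by
  induction D with
  | nil => simp [flL]
  | cons d D ih =>
    have h1 := ih (fun d hd => h d (List.mem_cons_of_mem _ hd))
    have h2 := EdgeM.card hE (h d List.mem_cons_self)
    simp [flL] at h2 ⊢
    rw [h1, Nat.mul_add]
    omega

theorem image_getD (l : List (Fin n)) (a : Fin n) :
    (Finset.range l.length).image (fun j => l.getD j a) = l.toFinset := by
  ext v
  simp only [Finset.mem_image, Finset.mem_range, List.mem_toFinset, List.mem_iff_getElem]
  constructor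
  · rintro ⟨j, hj, h⟩
    exact ⟨j, hj, by rw [← h, List.getD_eq_getElem _ _ hj]⟩
  · rintro ⟨j, hj, h⟩
    exact ⟨j, hj, by rw [← h, List.getD_eq_getElem _ _ hj]⟩

theorem ham_of_closed {r : ℕ} {E : Finset (Finset (Fin n))} (hE : E ⊆ kSets n (r+2))
    {a : Fin n} {D : List (LDart n)} (hch : chn a D a) (hok : ∀ d ∈ D, d.ok E)
    (hvs : vsL D = univ.val) : IsHamCycle n (r+2) 1 E := by
  have hn : 0 < n := lt_of_le_of_lt (Nat.zero_le _) a.2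
  have : NeZero n := ⟨by omega⟩
  have hl : ((flL D : List (Fin n)) : Multiset (Fin n)) = univ.val := by
    have := flL_coe hch
    rw [Multiset.cons_inj_right] at this
    rw [this, hvs]
  have hlen : (flL D).length = n := by
    have := congrArg Multiset.card hl
    simpa using this
  have hlen2 : n = (r+1) * D.length := hlen.symm.trans (flL_length hE hok)
  have h0 : (flL D).getD 0 a = a := by
    cases D with
    | nil => simp [flL]
    | cons d D => simpa [flL] using hch.1
  refine ⟨fun m => (flL D).getD m.val a, ?_, ?_⟩
  · rw [Fintype.bijective_iff_surjective_and_card]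
    refine ⟨?_, by simp⟩
    intro v
    have hv : v ∈ flL D := by
      have : v ∈ ((flL D : List (Fin n)) : Multiset (Fin n)) := by rw [hl]; simp
      simpa using this
    obtain ⟨i, hi, h⟩ := List.mem_iff_getElem.1 hv
    refine ⟨(i : ZMod n), ?_⟩
    simp only
    rw [ZMod.val_natCast, Nat.mod_eq_of_lt (by omega), List.getD_eq_getElem _ _ hi, h]
  · intro i hi
    have hk : r + 2 - 1 = r + 1 := rfl
    simp only [hk] at hi ⊢
    have hiD : i < D.length := by
      rw [hlen2, Nat.mul_div_cancel_left _ (by omega)] at hi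
      exact hi
    obtain ⟨P, d, Q, rfl, hP⟩ : ∃ P d Q, D = P ++ d :: Q ∧ P.length = i :=
      ⟨D.take i, D[i], D.drop (i+1), by simp, by simp; omega⟩
    have okd := hok d (by simp)
    have hPl := flL_length hE (D := P) (fun e he => hok e (by simp [he]))
    set B := d.x :: (d.O + d.I).toList with hB
    have hBl : B.length = r + 1 := by
      have h2 := EdgeM.card hE okd
      simp at h2
      simp [hB]; omega
    have hfl : flL (P ++ d :: Q) = flL P ++ (B ++ flL Q) := by
      rw [flL_append]; rfl
    have hPi : (flL P).length = i * (r+1) := by rw [hPl, hP, mul_comm]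
    have hnle : (i + 1) * (r+1) ≤ n := by
      rw [hlen2, mul_comm]
      exact Nat.mul_le_mul_left _ hiD
    have hn1 : (i+1)*(r+1) = i*(r+1) + (r+1) := by ring
    have w1 : ∀ j ∈ Finset.range (r+1), (flL (P ++ d :: Q)).getD ((i * (r+1) + j : ℕ) : ZMod n).val a
        = B.getD j a := by
      intro j hj
      rw [Finset.mem_range] at hj
      rw [ZMod.val_natCast, Nat.mod_eq_of_lt (by omega), hfl,
        List.getD_append_right _ _ _ _ (by omega), hPi, Nat.add_sub_cancel_left,
        List.getD_append _ _ _ _ (by omega)]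
    have w2 : (flL (P ++ d :: Q)).getD ((i * (r+1) + (r+1) : ℕ) : ZMod n).val a = d.z := by
      rw [ZMod.val_natCast]
      simp only [chn_append, chn] at hch
      obtain ⟨b, _, _, h3⟩ := hch
      cases Q with
      | nil =>
        have : i * (r+1) + (r+1) = n := by
          rw [hlen2, ← hP]; simp; ring
        rw [this, Nat.mod_self, h0]
        exact h3.symm
      | cons d' Q =>
        have : i * (r+1) + (r+1) < n := by
          rw [hlen2, ← hP]; simp; nlinarith
        rw [Nat.mod_eq_of_lt this, hfl, List.getD_append_right _ _ _ _ (by omega), hPi, Nat.add_sub_cancel_left,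
          List.getD_append_right _ _ _ _ (by omega), hBl]
        simpa [flL] using h3.1
    obtain ⟨e, heE, he⟩ := okd
    have : (Finset.range (r+2)).image (fun j => (flL (P ++ d :: Q)).getD ((i * (r+1) + j : ℕ) : ZMod n).val a) = e := by
      rw [Finset.range_add_one, Finset.image_insert, w2, Finset.image_congr w1, ← hBl, image_getD]
      ext v
      have : v ∈ e ↔ v ∈ d.x ::ₘ d.z ::ₘ (d.O + d.I) := by rw [← he]; rfl
      rw [this]
      simp [hB]
      tauto
    rw [this]; exact heE

end ham

open Finset
open scoped Classical

section det
variable {n : ℕ}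

theorem cnt_of_sum {good : Fin n → LDart n → Prop} {D : List (LDart n)} {S : Finset (Fin n)}
    {M : ℕ} {y : ℝ} (h : ∑ s ∈ S, ((1:ℝ)/2)^(cntL good s D) ≤ y) (hy : y < (1/2)^M) :
    ∀ s ∈ S, M ≤ cntL good s D := by
  intro s hs
  have h1 : ((1:ℝ)/2)^(cntL good s D) ≤ ∑ s ∈ S, ((1:ℝ)/2)^(cntL good s D) :=
    Finset.single_le_sum (f := fun s => ((1:ℝ)/2)^(cntL good s D)) (fun _ _ => by positivity) hs
  by_contra hc
  push Not at hc
  have : ((1:ℝ)/2)^M ≤ (1/2)^(cntL good s D) :=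
    pow_le_pow_of_le_one (by norm_num) (by norm_num) hc.le
  linarith

set_option maxHeartbeats 2000000 in
theorem det_main {r d N f0 D0 m M : ℕ} {H G : Finset (Finset (Fin n))} (hH : H ⊆ kSets n (r+2))
    (hG : G ⊆ kSets n (r+2)) (hn : 0 < n) (hdvd : (r+1) ∣ n)
    (hdeg : ∀ S : Finset (Fin n), S.card = r + 1 → d ≤ (nbrS H S).card) (hdn : d ≤ n)
    (hP : PRP G N (r+2))
    {γ : ℝ} (hγ0 : 0 ≤ γ) (hγ1 : γ ≤ 1) (hγ : γ * (n:ℝ)^2 ≤ (D0:ℝ)^2) (hD0 : 0 < D0)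
    (hF : f0 + D0 ≤ d) (hFn : f0 + r < n)
    (hf0 : f0 + (r + 2) + 2 * (r + N) + r * N ≤ d)
    (hm : 1 + 8 * (r+1) * m ≤ f0)
    (hres : f0 + 2 * (r + N + r * N) ≤ d)
    (hV : f0 + 2 * (r + N + r * N) + ((r+1) * (2 * N) + 1 + (2*r+3) * N) < n)
    (hM1 : 32 * N ≤ M) (hM2 : r * N ≤ M) (hsmall : (n:ℝ) * (1 - γ/2)^m < (1/2)^M) :
    IsHamCycle n (r+2) 1 (H ∪ G) := by
  have hHG : H ∪ G ⊆ kSets n (r+2) := Finset.union_subset hH hG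
  have hρ : 0 ≤ 1 - γ/2 := by linarith
  set a : Fin n := ⟨0, hn⟩ with ha
  obtain ⟨DA, b, chA, okA, ndA, avA, lenA, sumA⟩ := build hH hG hdeg hdn hP hρ
    (prov1 hdeg hγ0 hγ1 hγ hD0 hF hFn) hf0 (F0 := {a}) (b0 := a) (by simp) m (by simp; nlinarith)
  set F1 := {a} ∪ (vsL DA).toFinset with hF1
  have cA := card_vsL hHG okA
  have hF1c : F1.card ≤ 1 + 4 * (r+1) * m := by
    have h1 : F1.card ≤ _ := Finset.card_union_le {a} (vsL DA).toFinset
    have h2 := Multiset.toFinset_card_le (vsL DA)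
    rw [cA, lenA] at h2
    have h3 : (r+1)*(4*m) = 4*(r+1)*m := by ring
    simp only [Finset.card_singleton] at h1
    omega
  have hbF1 : b ∈ F1 := by
    have := chn_end_mem chA
    rw [hF1]
    rcases Multiset.mem_cons.1 this with h | h
    · simp [h]
    · simp [h]
  have cntA := cnt_of_sum sumA hsmall
  have hBex : ∃ (DB : List (LDart n)) (c : Fin n), chn b DB c ∧ (∀ e ∈ DB, e.ok (H ∪ G)) ∧ (vsL DB).Nodup ∧
      (∀ u ∈ vsL DB, u ∉ F1) ∧ DB.length ≤ 4 * m ∧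
      ∀ s ∈ univ \ (F1 ∪ (vsL DB).toFinset), r * (r * N) ≤ r * cntL (good2 H) s DB := by
    rcases Nat.eq_zero_or_pos r with h0 | hr
    · exact ⟨[], b, rfl, by simp, by simp [vsL], by simp [vsL], by simp, by simp [h0]⟩
    · obtain ⟨DB, c, h1, h2, h3, h4, h5, h6⟩ := build hH hG hdeg hdn hP hρ
        (prov2 hdeg hr hγ0 hγ1 hγ hD0 hF hFn) hf0 (F0 := F1) (b0 := b) hbF1 m (by nlinarith)
      refine ⟨DB, c, h1, h2, h3, h4, h5.le, ?_⟩
      intro s hs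
      exact Nat.mul_le_mul_left _ (hM2.trans (cnt_of_sum h6 hsmall s hs))
  obtain ⟨DB, c, chB, okB, ndB, avB, lenB, cntB⟩ := hBex
  have cB := card_vsL hHG okB
  set F2 := F1 ∪ (vsL DB).toFinset with hF2
  have hF2c0 : F2.card ≤ 1 + Multiset.card (vsL DA) + Multiset.card (vsL DB) := by
    have h1 : F1.card ≤ _ := Finset.card_union_le {a} (vsL DA).toFinset
    have h2 := Multiset.toFinset_card_le (vsL DA)
    have h3 : F2.card ≤ _ := Finset.card_union_le F1 (vsL DB).toFinset
    have h4 := Multiset.toFinset_card_le (vsL DB)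
    simp only [Finset.card_singleton] at h1
    omega
  have hF2c : F2.card ≤ f0 := by
    have h5 : (r+1)*DA.length + (r+1) * DB.length ≤ 8*(r+1)*m := by rw [lenA]; nlinarith
    omega
  have haF1 : a ∈ F1 := by simp [hF1]
  have haF2 : a ∈ F2 := Finset.mem_union_left _ haF1
  have hcF2 : c ∈ F2 := by
    rcases Multiset.mem_cons.1 (chn_end_mem chB) with h | h
    · rw [h]; exact Finset.mem_union_left _ hbF1
    · exact Finset.mem_union_right _ (by simpa using h)
  obtain ⟨T, X, R, cT, cX, cR, dTX, dTR, dXR, dTF, dXF, dRF, hE⟩ :=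
    reserve (N := N) hdeg hdn hcF2 (by omega)
  set F3 := F2 ∪ T ∪ X ∪ R with hF3
  have hF3c : F3.card ≤ F2.card + (r + N + r * N) := by
    have h1 : F3.card ≤ _ := Finset.card_union_le (F2 ∪ T ∪ X) R
    have h2 := Finset.card_union_le (F2 ∪ T) X
    have h3 := Finset.card_union_le F2 T
    omega
  obtain ⟨T', X', R', cT', cX', cR', dTX', dTR', dXR', dTF', dXF', dRF', hE'⟩ :=
    reserve (N := N) (b := a) (F := F3) hdeg hdn (by simp [hF3, haF2]) (by omega)
  set F4 := F3 ∪ T' ∪ X' ∪ R' with hF4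
  have hF4c : F4.card ≤ F2.card + 2 * (r + N + r * N) := by
    have h1 : F4.card ≤ _ := Finset.card_union_le (F3 ∪ T' ∪ X') R'
    have h2 := Finset.card_union_le (F3 ∪ T') X'
    have h3 := Finset.card_union_le F3 T'
    omega
  have hVc : (univ \ F4).card = n - F4.card := by
    rw [Finset.card_sdiff_of_subset (Finset.subset_univ _), Finset.card_univ, Fintype.card_fin]
  simp only [hF3, Finset.disjoint_union_right] at dTF' dXF' dRF'
  have sub : ∀ Y ⊆ F4, Disjoint Y (univ \ F4) := fun Y hY =>
    Finset.disjoint_of_subset_left hY Finset.disjoint_sdiff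
  have memF4 : ∀ v, v ∈ F4 ↔ v ∈ F2 ∨ v ∈ T ∨ v ∈ X ∨ v ∈ R ∨ v ∈ T' ∨ v ∈ X' ∨ v ∈ R' := by
    intro v
    simp only [hF4, hF3, Finset.mem_union, or_assoc]
  obtain ⟨D, x, x', Mm, hx, hx', chD, okD, vsD, ndM, hMm, lenD⟩ := long_path_close hG hP (V := univ \ F4)
    (X := X) (R := R) (X' := X') (R' := R') (by omega) cX cX' cR cR'
    (sub X (fun v hv => (memF4 v).2 (by simp only [hv, true_or, or_true]))) (sub X' (fun v hv => (memF4 v).2 (by simp only [hv, true_or, or_true])))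
    (sub R (fun v hv => (memF4 v).2 (by simp only [hv, true_or, or_true]))) (sub R' (fun v hv => (memF4 v).2 (by simp only [hv, true_or, or_true])))
    dXR dXR' dXF'.1.2.symm dRF'.1.2.symm dXF'.2 dRF'.2.symm
  set DC : List (LDart n) := ⟨c, x, 0, T.val⟩ :: (D ++ [⟨x', a, 0, T'.val⟩]) with hDC
  have chC : chn c DC a := by
    refine ⟨rfl, ?_⟩
    rw [chn_append]
    exact ⟨x', chD, rfl, rfl⟩
  have okC : ∀ e ∈ DC, e.ok (H ∪ G) := by
    intro e he
    simp only [hDC, List.mem_cons, List.mem_append, List.not_mem_nil, or_false] at he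
    rcases he with rfl | h | rfl
    · have := (hE x hx).mono (Finset.subset_union_left (s₂ := G))
      simpa [LDart.ok] using this
    · exact (okD e h).mono Finset.subset_union_right
    · have := (hE' x' hx').mono (Finset.subset_union_left (s₂ := G))
      rw [Multiset.cons_swap] at this
      simpa [LDart.ok] using this
  have cC := card_vsL hHG okC
  have lenC : DC.length = D.length + 2 := by simp [hDC]
  set Z := x ::ₘ x' ::ₘ (T.val + (T'.val + Mm)) with hZ
  have vsC : vsL DC = a ::ₘ Z := by
    simp only [hDC, vsL, vsL_append, vsD, hZ, ← Multiset.singleton_add]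
    abel
  have MF : ∀ v ∈ Mm, v ∉ F4 ∨ v ∈ R ∨ v ∈ R' := by
    intro v hv
    have := hMm v hv
    simp only [Finset.mem_union, Finset.mem_sdiff, Finset.mem_univ, true_and, or_assoc] at this
    exact this
  have MN : ∀ v ∈ Mm, v ∉ F2 ∧ v ∉ T ∧ v ∉ X ∧ v ∉ T' ∧ v ∉ X' := by
    intro v hv
    simp only [Finset.disjoint_left] at *
    rcases MF v hv with h | h | h
    · simp only [memF4, not_or] at h
      exact ⟨h.1, h.2.1, h.2.2.1, h.2.2.2.2.1, h.2.2.2.2.2.1⟩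
    · exact ⟨dRF h, fun h' => dTR h' h, fun h' => dXR h' h, fun h' => dTF'.2 h' h, fun h' => dXF'.2 h' h⟩
    · exact ⟨dRF'.1.1.1 h, dRF'.1.1.2 h, dRF'.1.2 h, fun h' => dTR' h' h, fun h' => dXR' h' h⟩
  have ZF : ∀ v ∈ Z, v ∉ F2 := by
    intro v hv
    simp only [hZ, Multiset.mem_cons, Multiset.mem_add, Finset.mem_val] at hv
    simp only [Finset.disjoint_left] at *
    rcases hv with rfl | rfl | h | h | h
    · exact dXF hx
    · exact dXF'.1.1.1 hx'
    · exact dTF h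
    · exact dTF'.1.1.1 h
    · exact (MN v h).1
  have ndZ : Z.Nodup := by
    simp only [Finset.disjoint_left] at *
    rw [hZ]
    simp only [Multiset.nodup_cons, Multiset.nodup_add, Multiset.mem_cons, Multiset.mem_add, Finset.mem_val,
      not_or]
    refine ⟨⟨?_, fun h => dTX h hx, fun h => dTF'.1.2 h hx, fun h => (MN x h).2.2.1 hx⟩,
      ⟨fun h => dXF'.1.1.2 hx' h, fun h => dTX' h hx', fun h => (MN x' h).2.2.2.2 hx'⟩,
      T.nodup, ⟨T'.nodup, ndM, Multiset.disjoint_left.2 (fun h h' => (MN _ h').2.2.2.1 h)⟩, ?_⟩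
    · rintro rfl
      exact dXF'.1.2 hx' hx
    · rw [Multiset.disjoint_left]
      intro v hv h0
      rcases Multiset.mem_add.1 h0 with h | h
      · exact dTF'.1.1.2 h hv
      · exact (MN v h).2.1 hv
  have avA' : a ∉ vsL DA := fun h => avA a h (by simp)
  have avB' : a ∉ vsL DB := fun h => avB a h haF1
  have hdAB : Disjoint (vsL DA) (vsL DB) := by
    rw [Multiset.disjoint_left]
    intro v h1 h2
    exact avB v h2 (by simp [hF1, h1])
  have F2mem : ∀ v, v ∈ F2 ↔ v = a ∨ v ∈ vsL DA ∨ v ∈ vsL DB := by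
    intro v
    simp only [hF2, hF1, Finset.mem_union, Finset.mem_singleton, Multiset.mem_toFinset, or_assoc]
  set tot := a ::ₘ (vsL DA + vsL DB) + Z with htot
  have nd1 : (a ::ₘ (vsL DA + vsL DB)).Nodup := by
    rw [Multiset.nodup_cons, Multiset.nodup_add]
    refine ⟨?_, ndA, ndB, hdAB⟩
    rw [Multiset.mem_add]
    exact not_or.2 ⟨avA', avB'⟩
  have ndtot : tot.Nodup := by
    rw [htot, Multiset.nodup_add]
    refine ⟨nd1, ndZ, ?_⟩
    rw [Multiset.disjoint_left]
    intro v h1 h2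
    refine ZF v h2 ((F2mem v).2 ?_)
    simpa using h1
  set U := univ \ tot.toFinset with hU
  have hUtot : U.val + tot = univ.val := by
    have hdis : Disjoint U.val tot := by
      rw [Multiset.disjoint_left]
      intro v h1 h2
      simp only [hU, Finset.mem_val, Finset.mem_sdiff, Multiset.mem_toFinset] at h1
      exact h1.2 h2
    refine (Multiset.Nodup.ext (Multiset.nodup_add.2 ⟨U.nodup, ndtot, hdis⟩) univ.nodup).2 ?_
    intro v
    simp only [hU, Multiset.mem_add, Finset.mem_val, Finset.mem_sdiff, Finset.mem_univ, Multiset.mem_toFinset, true_and, iff_true]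
    exact (em _).symm
  have htot2 : tot = vsL DA + vsL DB + vsL DC := by
    rw [htot, vsC]
    simp only [← Multiset.singleton_add]
    abel
  have hcard : U.card + ((r+1) * DA.length + (r+1) * DB.length + (r+1) * (D.length + 2)) = n := by
    have := congrArg Multiset.card hUtot
    rw [htot2] at this
    simp only [Multiset.card_add, cA, cB, cC, lenC, Finset.card_val, Finset.card_univ, Fintype.card_fin] at this
    exact this
  have hUdvd : (r+1) ∣ U.card := by
    have h1 : (r+1) ∣ ((r+1) * DA.length + (r+1) * DB.length + (r+1) * (D.length + 2)) :=
      ⟨DA.length + DB.length + (D.length + 2), by ring⟩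
    rw [← hcard] at hdvd
    exact (Nat.dvd_add_left h1).1 hdvd
  obtain ⟨t, ht⟩ := hUdvd
  have htN : t ≤ 7 * N := by
    rw [cA, cB] at hF2c0
    have h1 : (r+1) * (D.length + 2*N) = (r+1) * D.length + (r+1) * (2*N) := by ring
    have h2 : (r+1) * (D.length + 2) = (r+1) * D.length + 2 * (r+1) := by ring
    have h3 : U.card ≤ (r+1) * (2*N) + (2*r+3)*N + 2 * (N + r*N) := by omega
    have h4 : (r+1) * t ≤ (r+1) * (7*N) := by
      rw [← ht]
      refine h3.trans ?_
      nlinarith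
    exact Nat.le_of_mul_le_mul_left h4 (by omega)
  have hUn : ∀ s ∈ U, s ∉ F2 := by
    intro s hs h
    rw [F2mem] at h
    simp only [hU, htot, Finset.mem_sdiff, Multiset.mem_toFinset, Multiset.mem_add, Multiset.mem_cons] at hs
    exact hs.2 (Or.inl h)
  obtain ⟨DA', DB', e1, e2, e3, e4, e5⟩ := absorb_all hP (H := H) t U.toList DA DB (by simp [ht]) chA chB okA okB
    (by
      rw [Finset.coe_toList]
      rw [Multiset.nodup_add]
      refine ⟨U.nodup, nd1, ?_⟩
      rw [Multiset.disjoint_left]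
      intro v h1 h2
      exact hUn v h1 ((F2mem v).2 (by simpa using h2)))
    (by
      intro s hs
      have hs' := hUn s (by simpa using hs)
      have := cntA s (by
        simp only [Finset.mem_sdiff, Finset.mem_univ, true_and]
        exact fun h => hs' (Finset.mem_union_left _ h))
      unfold cs1
      omega)
    (by
      intro s hs
      refine cntB s ?_
      simp only [Finset.mem_sdiff, Finset.mem_univ, true_and]
      exact hUn s (by simpa using hs))
  refine ham_of_closed hHG (a := a) (D := DA' ++ (DB' ++ DC)) ?_ ?_ ?_
  · rw [chn_append]
    refine ⟨b, e1, ?_⟩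
    rw [chn_append]
    exact ⟨c, e2, chC⟩
  · intro e he
    simp only [List.mem_append] at he
    rcases he with h | h | h
    · exact e3 e h
    · exact e4 e h
    · exact okC e h
  · rw [vsL_append, vsL_append, ← add_assoc, e5, Finset.coe_toList, ← hUtot, htot2]
    abel

end det

open Finset
open scoped Classical

section prob
variable {n : ℕ}

theorem wt_total (k : ℕ) (p : ℝ) :
    ∑ E ∈ (kSets n k).powerset, p ^ E.card * (1 - p) ^ ((kSets n k).card - E.card) = 1 := by
  rw [Finset.sum_pow_mul_eq_add_pow]
  simp

theorem wt_avoid (k : ℕ) (p : ℝ) {T : Finset (Finset (Fin n))} (hT : T ⊆ kSets n k) :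
    ∑ E ∈ (kSets n k).powerset.filter (fun E => Disjoint E T),
      p ^ E.card * (1 - p) ^ ((kSets n k).card - E.card) = (1 - p) ^ T.card := by
  have h1 : (kSets n k).powerset.filter (fun E => Disjoint E T) = (kSets n k \ T).powerset := by
    ext E
    simp only [Finset.mem_filter, Finset.mem_powerset, Finset.subset_sdiff]
  rw [h1]
  have h2 : (kSets n k).card = (kSets n k \ T).card + T.card :=
    (Finset.card_sdiff_add_card_eq_card hT).symm
  have h3 : ∀ E ∈ (kSets n k \ T).powerset, p ^ E.card * (1 - p) ^ ((kSets n k).card - E.card) =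
      (p ^ E.card * (1 - p) ^ ((kSets n k \ T).card - E.card)) * (1 - p) ^ T.card := by
    intro E hE
    have := Finset.card_le_card (Finset.mem_powerset.1 hE)
    rw [h2, mul_assoc, ← pow_add]
    congr 2
    omega
  rw [Finset.sum_congr rfl h3, ← Finset.sum_mul, Finset.sum_pow_mul_eq_add_pow]
  simp

noncomputable def transv (k : ℕ) (A : Fin k → Finset (Fin n)) : Finset (Finset (Fin n)) :=
  (Fintype.piFinset A).image (fun c => univ.image c)

theorem transv_inj {k : ℕ} {A : Fin k → Finset (Fin n)} (hd : ∀ i j, i ≠ j → Disjoint (A i) (A j))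
    {c : Fin k → Fin n} (hc : ∀ i, c i ∈ A i) {i j : Fin k} {v : Fin n} (hv : v ∈ A i) (h : c j = v) :
    j = i := by
  by_contra hne
  exact Finset.disjoint_left.1 (hd j i hne) (hc j) (h ▸ hv)

theorem transv_card {k N : ℕ} {A : Fin k → Finset (Fin n)} (hA : ∀ i, (A i).card = N)
    (hd : ∀ i j, i ≠ j → Disjoint (A i) (A j)) : (transv k A).card = N ^ k := by
  unfold transv
  rw [Finset.card_image_of_injOn, Fintype.card_piFinset]
  · simp [hA]
  · intro c hc c' hc' h
    have hc1 : ∀ i, c i ∈ A i := by simpa using hc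
    have hc2 : ∀ i, c' i ∈ A i := by simpa using hc'
    funext i
    have : c i ∈ univ.image c' := by
      simp only at h
      rw [← h]; simp
    obtain ⟨j, _, hj⟩ := Finset.mem_image.1 this
    have := transv_inj hd hc2 (hc1 i) hj
    rw [← hj, this]

theorem transv_sub {k : ℕ} {A : Fin k → Finset (Fin n)}
    (hd : ∀ i j, i ≠ j → Disjoint (A i) (A j)) : transv k A ⊆ kSets n k := by
  intro e he
  obtain ⟨c, hc, rfl⟩ := Finset.mem_image.1 he
  have hc1 : ∀ i, c i ∈ A i := by simpa using hc
  refine Finset.mem_powersetCard.2 ⟨Finset.subset_univ _, ?_⟩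
  rw [Finset.card_image_of_injective]
  · simp
  · intro i j hij
    exact transv_inj hd hc1 (hc1 j) hij

theorem prob_main {k N : ℕ} {p : ℝ} (hp0 : 0 ≤ p) (hp1 : p ≤ 1) {P : Finset (Finset (Fin n)) → Prop}
    (hP : ∀ E, E ⊆ kSets n k → PRP E N k → P E) :
    1 - (2:ℝ) ^ (n * k) * (1 - p) ^ (N ^ k) ≤ gProb n k p P := by
  set wt : Finset (Finset (Fin n)) → ℝ := fun E => p ^ E.card * (1 - p) ^ ((kSets n k).card - E.card) with hwt
  have hw : ∀ E, 0 ≤ wt E := fun E => by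
    have : 0 ≤ 1 - p := by linarith
    simp only [hwt]; positivity
  have htot : ∑ E ∈ (kSets n k).powerset, wt E = 1 := wt_total k p
  have hg : gProb n k p P = ∑ E ∈ (kSets n k).powerset.filter (fun E => P E), wt E := rfl
  have hsplit := Finset.sum_filter_add_sum_filter_not (kSets n k).powerset (fun E => P E) wt
  set valid : (Fin k → Finset (Fin n)) → Prop := fun A =>
    (∀ i, (A i).card = N) ∧ (∀ i j, i ≠ j → Disjoint (A i) (A j)) with hvalid
  have hbad : ∑ E ∈ (kSets n k).powerset.filter (fun E => ¬ P E), wt E ≤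
      ∑ A ∈ (univ : Finset (Fin k → Finset (Fin n))).filter valid,
        ∑ E ∈ (kSets n k).powerset.filter (fun E => Disjoint E (transv k A)), wt E := by
    simp only [Finset.sum_filter (s := (kSets n k).powerset)]
    rw [Finset.sum_comm]
    refine Finset.sum_le_sum (fun E hE => ?_)
    have hnn : ∀ A ∈ (univ : Finset (Fin k → Finset (Fin n))).filter valid,
        0 ≤ (if Disjoint E (transv k A) then wt E else 0) := by
      intro A _
      split_ifs
      · exact hw E
      · exact le_refl _
    by_cases hPE : P E
    · simp only [hPE, not_true_eq_false, if_false]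
      exact Finset.sum_nonneg hnn
    · simp only [hPE, not_false_eq_true, if_true]
      have hnP : ¬ PRP E N k := fun h => hPE (hP E (Finset.mem_powerset.1 hE) h)
      unfold PRP at hnP
      push Not at hnP
      obtain ⟨A, h1, h2, h3⟩ := hnP
      have hAv : A ∈ (univ : Finset (Fin k → Finset (Fin n))).filter valid := by
        simp only [Finset.mem_filter, Finset.mem_univ, true_and, hvalid]
        exact ⟨h1, h2⟩
      have hdis : Disjoint E (transv k A) := by
        rw [Finset.disjoint_right]
        intro e he
        obtain ⟨c, hc, rfl⟩ := Finset.mem_image.1 he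
        exact h3 c (by simpa using hc)
      have := Finset.single_le_sum hnn hAv
      simpa only [hdis, if_true] using this
  have hle : ∑ A ∈ (univ : Finset (Fin k → Finset (Fin n))).filter valid,
        ∑ E ∈ (kSets n k).powerset.filter (fun E => Disjoint E (transv k A)), wt E ≤
      (2:ℝ) ^ (n * k) * (1 - p) ^ (N ^ k) := by
    calc _ = ∑ A ∈ (univ : Finset (Fin k → Finset (Fin n))).filter valid, (1-p)^(N^k) := by
          refine Finset.sum_congr rfl (fun A hA => ?_)
          have hA' := (Finset.mem_filter.1 hA).2
          rw [← transv_card hA'.1 hA'.2]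
          exact wt_avoid k p (transv_sub hA'.2)
      _ = ((univ : Finset (Fin k → Finset (Fin n))).filter valid).card * (1-p)^(N^k) := by
          rw [Finset.sum_const, nsmul_eq_mul]
      _ ≤ _ := by
          refine mul_le_mul_of_nonneg_right ?_ (pow_nonneg (by linarith) _)
          have := Finset.card_le_univ ((univ : Finset (Fin k → Finset (Fin n))).filter valid)
          simp only [Fintype.card_pi, Fintype.card_finset, Fintype.card_fin, Finset.prod_const, Finset.card_univ, ← pow_mul] at this
          exact_mod_cast this
  linarith

end prob

open Finset
open scoped Classical

set_option maxHeartbeats 2000000 in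
theorem det_const {r n N : ℕ} {α : ℝ} (h0 : 0 < α) (h1 : α ≤ 1)
    (hN : N = ⌈α^3 / (640 * (r+1) * (r+32)) * n⌉₊) (hn : 100 * ((r:ℝ) + 1) ≤ α * n)
    (hn2 : 2 * Real.exp (33 + r) / (α^3 / (640 * (r+1)))^2 < n)
    (hdvd : (r+1) ∣ n) {H G : Finset (Finset (Fin n))} (hH : H ⊆ kSets n (r+2))
    (hG : G ⊆ kSets n (r+2)) (hdeg : ∀ S : Finset (Fin n), S.card = r + 1 → α * n ≤ degOf H S)
    (hP : PRP G N (r+2)) : IsHamCycle n (r+2) 1 (H ∪ G) := by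
  set R : ℝ := (r : ℝ) with hR
  have hR0 : 0 ≤ R := Nat.cast_nonneg r
  set ε : ℝ := α^3 / (640 * (R+1) * (R+32)) with hε
  have hn0 : (0:ℝ) ≤ n := Nat.cast_nonneg n
  have hnr : 100 * (R+1) ≤ n := by nlinarith
  have hε0 : 0 < ε := by positivity
  have hα3 : α^3 ≤ α := by nlinarith [mul_nonneg h0.le h0.le]
  have hεn : (6*R+7) * ε ≤ α / 100 := by
    rw [hε, mul_div_assoc', div_le_iff₀ (by positivity)]
    have : (6*R+7) * α^3 ≤ (6*R+7) * α := mul_le_mul_of_nonneg_left hα3 (by positivity)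
    have h2 : 0 ≤ α * R := by positivity
    have h3 : 0 ≤ α * R * R := by positivity
    nlinarith
  have hN1 : (N:ℝ) < ε * n + 1 := by rw [hN]; exact Nat.ceil_lt_add_one (by positivity)
  have hNn : (6*R+7) * N ≤ α * n / 100 + (6*R+7) := by
    have e1 : (6*R+7) * N ≤ (6*R+7) * (ε * n + 1) := mul_le_mul_of_nonneg_left hN1.le (by positivity)
    have e2 := mul_le_mul_of_nonneg_right hεn hn0
    nlinarith
  have hRN : 0 ≤ R * N := by positivity
  have hN0 : (0:ℝ) ≤ N := Nat.cast_nonneg N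
  have hd1 : α * n ≤ (⌈α * n⌉₊ : ℝ) := Nat.le_ceil _
  have hD1 : α * n / 2 ≤ (⌈α * n / 2⌉₊ : ℝ) := Nat.le_ceil _
  have hD2 : (⌈α * n / 2⌉₊ : ℝ) < α * n / 2 + 1 := Nat.ceil_lt_add_one (by positivity)
  have hf1 : (⌊α * n / 4⌋₊ : ℝ) ≤ α * n / 4 := Nat.floor_le (by positivity)
  have hf2 : α * n / 4 < (⌊α * n / 4⌋₊ : ℝ) + 1 := Nat.lt_floor_add_one _
  have hm1 : (⌊α * n / (40 * (R+1))⌋₊ : ℝ) ≤ α * n / (40 * (R+1)) := Nat.floor_le (by positivity)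
  have hm2 : α * n / (40 * (R+1)) < (⌊α * n / (40 * (R+1))⌋₊ : ℝ) + 1 := Nat.lt_floor_add_one _
  have hαn : α * n ≤ n := by nlinarith
  refine det_main (d := ⌈α * n⌉₊) (N := N) (f0 := ⌊α * n / 4⌋₊) (D0 := ⌈α * n / 2⌉₊)
    (m := ⌊α * n / (40 * (R+1))⌋₊) (M := (32 + r) * N) (γ := α^2/4) hH hG ?_ hdvd ?_ ?_ hP ?_ ?_ ?_ ?_ ?_ ?_ ?_ ?_ ?_ ?_ ?_ ?_ ?_
  · have : (0:ℝ) < n := by linarith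
    exact_mod_cast this
  · intro S hS
    rw [Nat.ceil_le]
    refine (hdeg S hS).trans ?_
    exact_mod_cast degOf_le_nbr hH hS
  · rw [Nat.ceil_le]; exact hαn
  · positivity
  · nlinarith
  · have e : α^2/4 * (n:ℝ)^2 = (α * n / 2)^2 := by ring
    rw [e]
    exact pow_le_pow_left₀ (by positivity) hD1 2
  · have : (0:ℝ) < ⌈α * n / 2⌉₊ := by linarith
    exact_mod_cast this
  · have : ((⌊α * n / 4⌋₊ + ⌈α * n / 2⌉₊ : ℕ) : ℝ) ≤ (⌈α * n⌉₊ : ℕ) := by push_cast; linarith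
    exact_mod_cast this
  · have : ((⌊α * n / 4⌋₊ + r : ℕ) : ℝ) < (n : ℕ) := by push_cast; linarith
    exact_mod_cast this
  · have : ((⌊α * n / 4⌋₊ + (r+2) + 2 * (r+N) + r * N : ℕ) : ℝ) ≤ (⌈α * n⌉₊ : ℕ) := by push_cast; linarith
    exact_mod_cast this
  · have e : (R+1) * ⌊α * n / (40 * (R+1))⌋₊ ≤ α * n / 40 := by
      refine (mul_le_mul_of_nonneg_left hm1 (by positivity)).trans (le_of_eq ?_)
      field_simp
    have : ((1 + 8 * (r+1) * ⌊α * n / (40 * (R+1))⌋₊ : ℕ) : ℝ) ≤ (⌊α * n / 4⌋₊ : ℕ) := by push_cast; linarith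
    exact_mod_cast this
  · have : ((⌊α * n / 4⌋₊ + 2 * (r + N + r * N) : ℕ) : ℝ) ≤ (⌈α * n⌉₊ : ℕ) := by push_cast; linarith
    exact_mod_cast this
  · have : ((⌊α * n / 4⌋₊ + 2 * (r + N + r * N) + ((r+1) * (2 * N) + 1 + (2*r+3) * N) : ℕ) : ℝ) < (n : ℕ) := by
      push_cast; linarith
    exact_mod_cast this
  · nlinarith
  · nlinarith
  · set m := ⌊α * n / (40 * (R+1))⌋₊ with hm
    set β := α^3 / (640 * (R+1)) with hβ
    have hβ0 : 0 < β := by positivity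
    have e1 : (1 - α^2/4/2)^m ≤ Real.exp (-(α^2/8) * m) := by
      rw [mul_comm, Real.exp_nat_mul]
      refine pow_le_pow_left₀ (by nlinarith) ?_ m
      have := Real.add_one_le_exp (-(α^2/8))
      linarith
    have e2 : Real.exp (-(((32 + R) * N))) ≤ (1/2)^((32+r)*N) := by
      have : -((32 + R) * N) = (((32+r)*N : ℕ) : ℝ) * (-1) := by push_cast; ring
      rw [this, Real.exp_nat_mul]
      refine pow_le_pow_left₀ (Real.exp_pos _).le ?_ _
      rw [Real.exp_neg, one_div]
      refine inv_anti₀ (by norm_num) ?_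
      have := Real.add_one_le_exp (1:ℝ)
      linarith
    have e3 : α^2/8 * m ≥ 2 * β * n - 1 := by
      have : α^2/8 * (α * n / (40 * (R+1)) - 1) ≤ α^2/8 * m :=
        mul_le_mul_of_nonneg_left (by linarith) (by positivity)
      have h2 : α^2/8 * (α * n / (40 * (R+1))) = 2 * β * n := by
        rw [hβ]; field_simp; ring
      have h3 : α^2 ≤ 1 := pow_le_one₀ h0.le h1
      rw [mul_sub, h2] at this
      linarith
    have e4 : (32 + R) * N ≤ β * n + (32 + R) := by
      have : (32 + R) * N ≤ (32 + R) * (ε * n + 1) := mul_le_mul_of_nonneg_left hN1.le (by positivity)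
      have h2 : (32 + R) * ε = β := by
        rw [hβ, hε]; field_simp; ring
      calc _ ≤ _ := this
        _ = ((32 + R) * ε) * n + (32 + R) := by ring
        _ = _ := by rw [h2]
    have e5 : n * Real.exp (33 + R) < Real.exp (β * n) := by
      have q := Real.quadratic_le_exp_of_nonneg (show 0 ≤ β * n by positivity)
      rw [div_lt_iff₀ (by positivity)] at hn2
      have hnp : (0:ℝ) < n := by linarith
      have : (n:ℝ) * (2 * Real.exp (33 + R)) < n * (n * β^2) := mul_lt_mul_of_pos_left hn2 hnp
      have h7 : 0 ≤ β * n := by positivity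
      have h8 : (n:ℝ) * (n * β^2) = (β * n)^2 := by ring
      rw [h8] at this
      linarith
    calc (n:ℝ) * (1 - α^2/4/2)^m ≤ n * Real.exp (-(α^2/8) * m) := mul_le_mul_of_nonneg_left e1 hn0
      _ ≤ n * Real.exp ((33 + R) + (-(β * n) - (32 + R) * N)) := by
          refine mul_le_mul_of_nonneg_left (Real.exp_le_exp.2 ?_) hn0
          linarith
      _ = (n * Real.exp (33 + R)) * Real.exp (-(β * n) - (32 + R) * N) := by rw [Real.exp_add, mul_assoc]
      _ < Real.exp (β * n) * Real.exp (-(β * n) - (32 + R) * N) :=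
          mul_lt_mul_of_pos_right e5 (Real.exp_pos _)
      _ = Real.exp (-(((32 + R) * N))) := by rw [← Real.exp_add]; congr 1; ring
      _ ≤ _ := e2

theorem prob_const {r n N : ℕ} {ε c δ : ℝ} (hε : 0 < ε) (hc : c = ((r:ℝ)+3) / ε^(r+2)) (hδ : 0 < δ)
    (hN : ε * n ≤ N) (h1 : 1 ≤ (n:ℝ)) (hn : c ≤ n) (hn2 : 1/δ ≤ n) :
    0 ≤ c / (n:ℝ)^(r+1) ∧ c / (n:ℝ)^(r+1) ≤ 1 ∧
      (2:ℝ)^(n * (r+2)) * (1 - c / (n:ℝ)^(r+1))^(N^(r+2)) ≤ δ := by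
  have hc0 : 0 < c := by rw [hc]; positivity
  have hnp : (0:ℝ) < n := by linarith
  have hp1 : c / (n:ℝ)^(r+1) ≤ 1 := by
    rw [div_le_one (by positivity)]
    refine hn.trans ?_
    exact le_self_pow₀ h1 (by omega)
  refine ⟨by positivity, hp1, ?_⟩
  set p := c / (n:ℝ)^(r+1) with hp
  have hp0 : 0 ≤ p := by positivity
  have e1 : (2:ℝ)^(n*(r+2)) ≤ Real.exp (n * ((r:ℝ)+2)) := by
    have : (n:ℝ) * ((r:ℝ)+2) = ((n*(r+2) : ℕ) : ℝ) * 1 := by push_cast; ring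
    rw [this, Real.exp_nat_mul]
    refine pow_le_pow_left₀ (by norm_num) ?_ _
    have := Real.add_one_le_exp (1:ℝ)
    linarith
  have e2 : (1 - p)^(N^(r+2)) ≤ Real.exp (-(n * ((r:ℝ)+3))) := by
    have h2 : (1 - p)^(N^(r+2)) ≤ Real.exp (((N^(r+2) : ℕ) : ℝ) * (-p)) := by
      rw [Real.exp_nat_mul]
      refine pow_le_pow_left₀ (by linarith) ?_ _
      have := Real.add_one_le_exp (-p)
      linarith
    refine h2.trans (Real.exp_le_exp.2 ?_)
    have h3 : (ε * n)^(r+2) ≤ (N:ℝ)^(r+2) := pow_le_pow_left₀ (by positivity) hN _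
    have h4 : (ε * n)^(r+2) * p = n * ((r:ℝ)+3) := by
      rw [hp, hc, mul_pow]
      field_simp
      ring
    have h5 := mul_le_mul_of_nonneg_right h3 hp0
    push_cast
    nlinarith
  calc (2:ℝ)^(n * (r+2)) * (1 - p)^(N^(r+2)) ≤ Real.exp (n * ((r:ℝ)+2)) * Real.exp (-(n * ((r:ℝ)+3))) :=
        mul_le_mul e1 e2 (pow_nonneg (by linarith) _) (Real.exp_pos _).le
    _ = (Real.exp n)⁻¹ := by rw [← Real.exp_add, ← Real.exp_neg]; congr 1; ring
    _ ≤ δ := by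
        rw [inv_le_comm₀ (Real.exp_pos _) hδ, ← one_div]
        have := Real.add_one_le_exp (n:ℝ)
        linarith

theorem kks_aux
    (k : ℕ) (hk : 2 ≤ k) (α : ℝ) (hα : 0 < α) :
    ∃ c : ℝ, 0 < c ∧ ∀ δ : ℝ, 0 < δ → ∃ n₀ : ℕ, ∀ n : ℕ, n₀ ≤ n → (k - 1) ∣ n →
      ∀ H : Finset (Finset (Fin n)), H ⊆ kSets n k →
        (∀ S : Finset (Fin n), S.card = k - 1 → α * (n : ℝ) ≤ (degOf H S : ℝ)) →
        1 - δ ≤ gProb n k (c / (n : ℝ) ^ (k - 1))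
          (fun E => IsHamCycle n k 1 (H ∪ E)) := by
  obtain ⟨r, rfl⟩ : ∃ r, k = r + 2 := ⟨k - 2, by omega⟩
  have hk1 : r + 2 - 1 = r + 1 := rfl
  simp only [hk1]
  set α' := min α 1 with hα'
  have h0 : 0 < α' := lt_min hα one_pos
  have h1 : α' ≤ 1 := min_le_right _ _
  set ε : ℝ := α'^3 / (640 * ((r:ℝ)+1) * (r+32)) with hε
  have hε0 : 0 < ε := by positivity
  set c : ℝ := ((r:ℝ)+3) / ε^(r+2) with hc
  have hc0 : 0 < c := by positivity
  refine ⟨c, hc0, ?_⟩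
  intro δ hδ
  set B := 2 * Real.exp (33 + r) / (α'^3 / (640 * ((r:ℝ)+1)))^2 with hB
  have hB0 : 0 < B := by positivity
  have hA0 : 0 < 100 * ((r:ℝ)+1) / α' := by positivity
  have hD0 : 0 < 1/δ := by positivity
  refine ⟨⌈c + 1/δ + B + 100 * ((r:ℝ)+1) / α' + 1⌉₊, ?_⟩
  intro n hn hdvd H hH hdeg
  have hn' : c + 1/δ + B + 100 * ((r:ℝ)+1) / α' + 1 ≤ n := Nat.ceil_le.1 hn
  obtain ⟨p0, p1, p2⟩ := prob_const (N := ⌈ε * n⌉₊) hε0 hc hδ (Nat.le_ceil _) (n := n) (by linarith) (by linarith) (by linarith)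
  refine le_trans ?_ (prob_main (N := ⌈ε * n⌉₊) p0 p1 ?_)
  · linarith
  · intro E hE hPE
    refine det_const h0 h1 (N := ⌈ε * n⌉₊) rfl ?_ ?_ hdvd hH hE ?_ hPE
    · have : 100 * ((r:ℝ)+1) / α' ≤ n := by linarith
      rw [div_le_iff₀ h0] at this
      linarith
    · linarith
    · intro S hS
      refine le_trans ?_ (hdeg S hS)
      exact mul_le_mul_of_nonneg_right (min_le_left _ _) (Nat.cast_nonneg n)

/-- Theorem 1.1, Krivelevich–Kwan–Sudakov. For `k ≥ 2` and `α > 0`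
there is `c_k = c_k(α)` such that for any `k`-graph `H` on `n ∈ (k-1)ℕ` vertices with
`δ_{k-1}(H) ≥ αn` and `p = c_k / n^{k-1}`, a.a.s. `H ∪ G^{(k)}(n,p)` is 1-Hamiltonian. -/
theorem krivelevich_kwan_sudakov
    (k : ℕ) (hk : 2 ≤ k) (α : ℝ) (hα : 0 < α) :
    ∃ c : ℝ, 0 < c ∧ ∀ δ : ℝ, 0 < δ → ∃ n₀ : ℕ, ∀ n : ℕ, n₀ ≤ n → (k - 1) ∣ n →
      ∀ H : Finset (Finset (Fin n)), H ⊆ kSets n k →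
        (∀ S : Finset (Fin n), S.card = k - 1 → α * (n : ℝ) ≤ (degOf H S : ℝ)) →
        1 - δ ≤ gProb n k (c / (n : ℝ) ^ (k - 1))
          (fun E => IsHamCycle n k 1 (H ∪ E)) := by
  exact kks_aux k hk α hα
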